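/- arXiv:1707.01282 — 10 statements merged into one kernel-verified Lean document; each statement's English description precedes it below -/
import Mathlib

section
/- For every real r with 0 ≤ r ≤ 1 and 20·r⁶ + 8·r¹² ≤ 1, one has ∫₀^{R} dt/√(1 − t⁶) = 2·∫₀^{r} dt/√(1 − t⁶), where R = 2·r·√(1 − r⁶)/√(1 + 8·r⁶) (double-angle formula for the incomplete integral arcsleaf₃(r) = ∫₀^r dt/√(1 − t⁶)). -/
/-!
The substitution `t = f x`, `f x = 2 x √(1 - x⁶) / √(1 + 8 x⁶)`, turns the left integral into the
right one. With `u = x⁶`, two computations carry this: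
`f' = 2 (1 - 20 u - 8 u²) / (√(1 - u) √(1 + 8 u)³)` (`hasDerivAt_doubleLeaf`) and
`1 - f⁶ = (1 - 20 u - 8 u²)² / (1 + 8 u)³` (`sqrt_one_sub_doubleLeaf_pow`).
On `(0, r)` the common factor `1 - 20 u - 8 u²` is positive, so `f` is strictly increasing there and
`f' / √(1 - f⁶) = 2 / √(1 - u)`. When `20 r⁶ + 8 r¹² = 1` the left integral is improper (`R = 1`);
the change of variables for injective maps on the open interval `(0, r)` needs no integrability
hypothesis, so this case needs no separate treatment.
-/

/-- The double-angle map `x ↦ 2 x √(1 - x⁶) / √(1 + 8 x⁶)`. -/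
noncomputable def doubleLeaf (x : ℝ) : ℝ :=
  2 * x * Real.sqrt (1 - x ^ 6) / Real.sqrt (1 + 8 * x ^ 6)

/-- The derivative of `doubleLeaf` where `x⁶ < 1`, as a closed formula. -/
noncomputable def doubleLeafDeriv (x : ℝ) : ℝ :=
  2 * (1 - 20 * x ^ 6 - 8 * x ^ 12) / (Real.sqrt (1 - x ^ 6) * Real.sqrt (1 + 8 * x ^ 6) ^ 3)

lemma one_add_eight_pow_pos (x : ℝ) : 0 < 1 + 8 * x ^ 6 := by positivity

lemma hasDerivAt_doubleLeaf {x : ℝ} (hx : x ^ 6 < 1) :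
    HasDerivAt doubleLeaf (doubleLeafDeriv x) x := by
  have hA : 0 < 1 - x ^ 6 := by linarith
  have hB := one_add_eight_pow_pos x
  have ha := Real.sqrt_pos.2 hA
  have hb := Real.sqrt_pos.2 hB
  have h6 : HasDerivAt (fun y : ℝ => y ^ 6) (6 * x ^ 5) x := by
    simpa using hasDerivAt_pow 6 x
  have h1 := (h6.const_sub 1).sqrt hA.ne'
  have h2 := ((h6.const_mul 8).const_add 1).sqrt hB.ne'
  have h3 := ((((hasDerivAt_id x).const_mul 2).mul h1).div h2 hb.ne')
  refine h3.congr_deriv ?_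
  have ea := Real.sq_sqrt hA.le
  have eb := Real.sq_sqrt hB.le
  simp only [doubleLeafDeriv, id, Pi.mul_apply]
  generalize Real.sqrt (1 - x ^ 6) = a at *
  generalize Real.sqrt (1 + 8 * x ^ 6) = b at *
  field_simp
  rw [ea, eb]
  ring

lemma continuous_doubleLeaf : Continuous doubleLeaf := by
  unfold doubleLeaf
  refine Continuous.div (by fun_prop) (by fun_prop) fun x => ?_
  exact (Real.sqrt_pos.2 (one_add_eight_pow_pos x)).ne'

lemma sqrt_one_sub_doubleLeaf_pow {x : ℝ} (hx : x ^ 6 < 1)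
    (hD : 0 < 1 - 20 * x ^ 6 - 8 * x ^ 12) :
    Real.sqrt (1 - doubleLeaf x ^ 6)
      = (1 - 20 * x ^ 6 - 8 * x ^ 12) / Real.sqrt (1 + 8 * x ^ 6) ^ 3 := by
  have hA : 0 < 1 - x ^ 6 := by linarith
  have hB := one_add_eight_pow_pos x
  have hb := Real.sqrt_pos.2 hB
  have ea : Real.sqrt (1 - x ^ 6) ^ 6 = (1 - x ^ 6) ^ 3 := by
    rw [(pow_mul _ 2 3 : _ ^ 6 = _), Real.sq_sqrt hA.le]
  have eb : Real.sqrt (1 + 8 * x ^ 6) ^ 6 = (1 + 8 * x ^ 6) ^ 3 := by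
    rw [(pow_mul _ 2 3 : _ ^ 6 = _), Real.sq_sqrt hB.le]
  rw [Real.sqrt_eq_iff_mul_self_eq_of_pos (by positivity)]
  rw [doubleLeaf, div_pow, mul_pow, ea, eb, div_mul_div_comm, ← pow_add, eb]
  field_simp
  ring

/-- Strictly before the branch point, `1 - 20 x⁶ - 8 x¹²` is positive. -/
lemma branch_pos {r x : ℝ} (hbranch : 20 * r ^ 6 + 8 * r ^ 12 ≤ 1)
    (hx : x ∈ Set.Ioo 0 r) : x ^ 6 < 1 ∧ 0 < 1 - 20 * x ^ 6 - 8 * x ^ 12 := by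
  have h6 : x ^ 6 < r ^ 6 := pow_lt_pow_left₀ hx.2 hx.1.le (by norm_num)
  have h12 : x ^ 12 < r ^ 12 := pow_lt_pow_left₀ hx.2 hx.1.le (by norm_num)
  have hx12 : 0 ≤ x ^ 12 := by positivity
  constructor <;> linarith

lemma doubleLeafDeriv_pos {x : ℝ} (hx : x ^ 6 < 1)
    (hD : 0 < 1 - 20 * x ^ 6 - 8 * x ^ 12) : 0 < doubleLeafDeriv x := by
  have ha : 0 < Real.sqrt (1 - x ^ 6) := Real.sqrt_pos.2 (by linarith)
  have hb := Real.sqrt_pos.2 (one_add_eight_pow_pos x)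
  unfold doubleLeafDeriv
  positivity

theorem stmt_4 (r : ℝ) (hr₀ : 0 ≤ r) (hr₁ : r ≤ 1)
    (hbranch : 20 * r ^ 6 + 8 * r ^ 12 ≤ 1)
    (R : ℝ) (hR : R = 2 * r * Real.sqrt (1 - r ^ 6) / Real.sqrt (1 + 8 * r ^ 6)) :
    ∫ t in (0 : ℝ)..R, 1 / Real.sqrt (1 - t ^ 6)
      = 2 * ∫ t in (0 : ℝ)..r, 1 / Real.sqrt (1 - t ^ 6) := by
  have hR₀ : 0 ≤ R := by rw [hR]; positivity
  have hf0 : doubleLeaf 0 = 0 := by simp [doubleLeaf]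
  have hfr : doubleLeaf r = R := hR.symm
  have hmono : StrictMonoOn doubleLeaf (Set.Icc 0 r) := by
    refine strictMonoOn_of_deriv_pos (convex_Icc 0 r) continuous_doubleLeaf.continuousOn ?_
    intro x hx
    rw [interior_Icc] at hx
    obtain ⟨h1, h2⟩ := branch_pos hbranch hx
    rw [(hasDerivAt_doubleLeaf h1).deriv]
    exact doubleLeafDeriv_pos h1 h2
  have himage : doubleLeaf '' Set.Ioo 0 r = Set.Ioo 0 R := by
    apply Set.Subset.antisymm
    · rintro _ ⟨x, hx, rfl⟩
      have hx' := Set.Ioo_subset_Icc_self hx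
      rw [← hf0, ← hfr]
      exact ⟨hmono (Set.left_mem_Icc.2 hr₀) hx' hx.1, hmono hx' (Set.right_mem_Icc.2 hr₀) hx.2⟩
    · have h := intermediate_value_Ioo hr₀ continuous_doubleLeaf.continuousOn
      rwa [hf0, hfr] at h
  rw [intervalIntegral.integral_of_le hR₀, intervalIntegral.integral_of_le hr₀,
    MeasureTheory.integral_Ioc_eq_integral_Ioo, MeasureTheory.integral_Ioc_eq_integral_Ioo,
    ← himage,
    MeasureTheory.integral_image_eq_integral_abs_deriv_smul measurableSet_Ioo
      (fun x hx => (hasDerivAt_doubleLeaf (branch_pos hbranch hx).1).hasDerivWithinAt)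
      (hmono.injOn.mono Set.Ioo_subset_Icc_self),
    ← MeasureTheory.integral_const_mul]
  refine MeasureTheory.setIntegral_congr_fun measurableSet_Ioo fun x hx => ?_
  obtain ⟨h1, h2⟩ := branch_pos hbranch hx
  have ha : 0 < Real.sqrt (1 - x ^ 6) := Real.sqrt_pos.2 (by linarith)
  have hb := Real.sqrt_pos.2 (one_add_eight_pow_pos x)
  simp only [smul_eq_mul]
  rw [abs_of_pos (doubleLeafDeriv_pos h1 h2), sqrt_one_sub_doubleLeaf_pow h1 h2, doubleLeafDeriv]
  generalize 1 - 20 * x ^ 6 - 8 * x ^ 12 = D at *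
  field_simp
end

section
/- For every real l with −π₃/2 ≤ l ≤ π₃/2, one has ∫₀^{s(l)} dt/√(1 − t⁶) = l; that is, on this interval the leaf function s = sleaf₃ is the inverse of the function r ↦ ∫₀^r dt/√(1 − t⁶) on [−1, 1]. -/
/-!
The energy `(s')² + s⁶` is conserved, hence equal to `1`, so `|s| ≤ 1` and `|s'| = √(1 - s⁶)`.
Write `F r = ∫₀^r dt/√(1 - t⁶)`. As long as `s' > 0`, the chain rule gives
`(F ∘ s)' = s' / √(1 - s⁶) = 1`, hence `F (s l) = l` (`leafInt_comp_of_pos`). If `m` is the first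
positive zero of `s'`, then `s m = ±1` and `F (s m) = m ≥ 0` by continuity, which forces
`m = F 1 = π₃ / 2`. So `s' > 0` on `[0, π₃ / 2)`, which settles `l ≥ 0`; the case `l ≤ 0` follows
because `l ↦ -s (-l)` solves the same initial value problem and `F` is odd.

Continuity of `F` up to `±1` rests on the integrability of the singular integrand, which is dominated
by `1/√(1 - t²)`, the derivative of `arcsin`.
-/

open Set intervalIntegral MeasureTheory

/-- The inverse leaf function `r ↦ ∫₀^r dt/√(1 - t⁶)`, meaningful for `|r| ≤ 1`. -/
noncomputable def leafInt (r : ℝ) : ℝ := ∫ t in (0 : ℝ)..r, 1 / Real.sqrt (1 - t ^ 6)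

lemma leafInt_neg (r : ℝ) : leafInt (-r) = -leafInt r := by
  have h := intervalIntegral.integral_comp_neg (a := 0) (b := r)
    (fun t : ℝ => 1 / Real.sqrt (1 - t ^ 6))
  have e : ∀ t : ℝ, (-t) ^ 6 = t ^ 6 := fun t => by ring
  simp only [e, neg_zero] at h
  rw [leafInt, leafInt, h, intervalIntegral.integral_symm]

lemma leaf_integrable :
    IntervalIntegrable (fun t : ℝ => 1 / Real.sqrt (1 - t ^ 6)) volume (-1) 1 := by
  have h : IntervalIntegrable (fun t : ℝ => 1 / Real.sqrt (1 - t ^ 2)) volume (-1) 1 := by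
    apply intervalIntegrable_deriv_of_nonneg (g := Real.arcsin) Real.continuous_arcsin.continuousOn
    · intro x hx
      norm_num at hx
      exact Real.hasDerivAt_arcsin hx.1.ne' hx.2.ne
    · intro x _
      positivity
  refine h.mono_fun (by fun_prop : Measurable fun t : ℝ =>
    1 / Real.sqrt (1 - t ^ 6)).aestronglyMeasurable ?_
  rw [uIoc_of_le (by norm_num)]
  refine (ae_restrict_iff' measurableSet_Ioc).2 (Filter.Eventually.of_forall ?_)
  rintro t ⟨ht1, ht2⟩
  beta_reduce
  rw [Real.norm_of_nonneg (by positivity), Real.norm_of_nonneg (by positivity)]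
  -- At `t = 1` both sides are `1 / 0 = 0`.
  rcases ht2.eq_or_lt with rfl | ht2
  · norm_num
  have h2 : t ^ 2 < 1 := by nlinarith
  have h6 : t ^ 6 ≤ t ^ 2 := by nlinarith [sq_nonneg t, sq_nonneg (t ^ 2)]
  have : 0 < Real.sqrt (1 - t ^ 2) := Real.sqrt_pos.2 (by linarith)
  gcongr

lemma leafInt_continuousOn : ContinuousOn leafInt (Icc (-1) 1) := by
  have h := continuousOn_primitive_interval' (a := 0) leaf_integrable (by simp)
  rwa [uIcc_of_le (by norm_num)] at h

lemma leafInt_hasDerivAt {r : ℝ} (h1 : -1 < r) (h2 : r < 1) :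
    HasDerivAt leafInt (1 / Real.sqrt (1 - r ^ 6)) r := by
  have hr : r ^ 6 < 1 := by
    have h : r ^ 2 < 1 := by nlinarith
    calc r ^ 6 = (r ^ 2) ^ 3 := by ring
      _ < 1 := pow_lt_one₀ (sq_nonneg r) h (by norm_num)
  apply integral_hasDerivAt_right
  · refine leaf_integrable.mono_set ?_
    rw [uIcc_of_le (by norm_num : (-1 : ℝ) ≤ 1)]
    exact uIcc_subset_Icc (by simp) ⟨h1.le, h2.le⟩
  · exact (by fun_prop : Measurable fun t : ℝ =>
      1 / Real.sqrt (1 - t ^ 6)).stronglyMeasurable.stronglyMeasurableAtFilter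
  · have : Real.sqrt (1 - r ^ 6) ≠ 0 := (Real.sqrt_pos.2 (by linarith)).ne'
    exact ContinuousAt.div (by fun_prop) (by fun_prop) this

section
variable {s v : ℝ → ℝ}

lemma leaf_energy (hs : ∀ x, HasDerivAt s (v x) x) (hv : ∀ x, HasDerivAt v (-3 * s x ^ 5) x)
    (h0 : s 0 = 0) (h1 : v 0 = 1) (x : ℝ) : v x ^ 2 + s x ^ 6 = 1 := by
  have hd : ∀ y, HasDerivAt (fun y => v y ^ 2 + s y ^ 6) 0 y := fun y => by
    refine (((hv y).pow 2).add ((hs y).pow 6)).congr_deriv ?_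
    push_cast
    ring
  have := is_const_of_deriv_eq_zero (fun y => (hd y).differentiableAt) (fun y => (hd y).deriv) x 0
  simpa [h0, h1] using this

lemma leaf_mem_Icc (hE : ∀ x, v x ^ 2 + s x ^ 6 = 1) (x : ℝ) : s x ∈ Icc (-1) 1 := by
  have h : s x ^ 6 ≤ 1 := by nlinarith [hE x, sq_nonneg (v x)]
  rw [mem_Icc, ← abs_le]
  have h' : |s x| ^ 6 ≤ 1 := by rwa [Even.pow_abs (by decide)]
  exact (pow_le_one_iff_of_nonneg (abs_nonneg _) (by norm_num)).1 h'

/-- Up to the first zero of the derivative, `leafInt ∘ s` is the identity. -/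
lemma leafInt_comp_of_pos (hs : ∀ x, HasDerivAt s (v x) x) (h0 : s 0 = 0)
    (hE : ∀ x, v x ^ 2 + s x ^ 6 = 1) {m : ℝ} (hm : 0 ≤ m)
    (hpos : ∀ x, 0 ≤ x → x < m → 0 < v x) : leafInt (s m) = m := by
  have hcs : Continuous s := continuous_iff_continuousAt.2 fun x => (hs x).continuousAt
  have hc : ContinuousOn (fun x => leafInt (s x) - x) (Icc 0 m) :=
    (leafInt_continuousOn.comp hcs.continuousOn fun x _ => leaf_mem_Icc hE x).sub continuousOn_id
  have hd : ∀ x ∈ Ico 0 m, HasDerivWithinAt (fun x => leafInt (s x) - x) 0 (Ici x) x := by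
    rintro x ⟨hx0, hxm⟩
    have hvx := hpos x hx0 hxm
    have hm := leaf_mem_Icc hE x
    have hne : s x ^ 6 ≠ 1 := fun h => by nlinarith [hE x]
    have hlt : s x < 1 := lt_of_le_of_ne hm.2 fun h => hne (by rw [h]; norm_num)
    have hgt : -1 < s x := lt_of_le_of_ne hm.1 fun h => hne (by rw [← h]; norm_num)
    have hsq : Real.sqrt (1 - s x ^ 6) = v x := by
      rw [← hE x, add_sub_cancel_right, Real.sqrt_sq hvx.le]
    have h := ((leafInt_hasDerivAt hgt hlt).comp x (hs x)).sub (hasDerivAt_id x)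
    rw [hsq, one_div_mul_cancel hvx.ne', sub_self] at h
    exact h.hasDerivWithinAt
  have := constant_of_has_deriv_right_zero hc hd m ⟨hm, le_rfl⟩
  simp only [h0, sub_zero] at this
  have h00 : leafInt 0 = 0 := by simp [leafInt]
  linarith

lemma leafInt_comp_of_nonneg (hs : ∀ x, HasDerivAt s (v x) x)
    (hv : ∀ x, HasDerivAt v (-3 * s x ^ 5) x) (h0 : s 0 = 0) (h1 : v 0 = 1) {l : ℝ} (hl : 0 ≤ l)
    (hl' : l ≤ leafInt 1) : leafInt (s l) = l := by
  have hE := leaf_energy hs hv h0 h1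
  refine leafInt_comp_of_pos hs h0 hE hl fun b hb hbl => ?_
  by_contra! hvb
  have hcv : Continuous v := continuous_iff_continuousAt.2 fun x => (hv x).continuousAt
  have ivt : ∀ x, 0 ≤ x → v x ≤ 0 → ∃ z ∈ Icc 0 x, v z = 0 := fun x hx hvx =>
    intermediate_value_Icc' hx hcv.continuousOn ⟨hvx, by rw [h1]; norm_num⟩
  obtain ⟨z, hz, hvz⟩ := ivt b hb hvb
  have hK : IsCompact (Icc 0 b ∩ v ⁻¹' {0}) :=
    isCompact_Icc.inter_right (isClosed_singleton.preimage hcv)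
  -- `m` is the first zero of `v` on `[0, b]`.
  obtain ⟨m, ⟨hmb, hvm⟩, hleast⟩ := hK.exists_isLeast ⟨z, hz, hvz⟩
  have hvm : v m = 0 := hvm
  have hFm : leafInt (s m) = m := by
    refine leafInt_comp_of_pos hs h0 hE hmb.1 fun x hx hxm => ?_
    by_contra! hvx
    obtain ⟨y, hy, hvy⟩ := ivt x hx hvx
    have : m ≤ y := hleast ⟨⟨hy.1, by linarith [hy.2, hmb.2]⟩, hvy⟩
    linarith [hy.2]
  have hs6 : s m ^ 6 = 1 := by simpa [hvm] using hE m
  have hm0 := hmb.1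
  have hmb' := hmb.2
  rcases (pow_eq_one_iff_of_ne_zero (by norm_num : 6 ≠ 0)).1 hs6 with h | ⟨h, -⟩
  · rw [h] at hFm
    linarith
  · rw [h, leafInt_neg] at hFm
    linarith

end

theorem stmt_6 (s : ℝ → ℝ)
    (hs : Differentiable ℝ s) (hs' : Differentiable ℝ (deriv s))
    (hode : ∀ l : ℝ, deriv (deriv s) l = -3 * s l ^ 5)
    (h0 : s 0 = 0) (h1 : deriv s 0 = 1)
    (π₃ : ℝ) (hπ₃ : π₃ = 2 * ∫ t in (0 : ℝ)..1, 1 / Real.sqrt (1 - t ^ 6)) :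
    ∀ l : ℝ, -π₃ / 2 ≤ l → l ≤ π₃ / 2 →
      ∫ t in (0 : ℝ)..(s l), 1 / Real.sqrt (1 - t ^ 6) = l := by
  intro l hl1 hl2
  change π₃ = 2 * leafInt 1 at hπ₃
  change leafInt (s l) = l
  have hd : ∀ x, HasDerivAt s (deriv s x) x := fun x => (hs x).hasDerivAt
  have hd' : ∀ x, HasDerivAt (deriv s) (-3 * s x ^ 5) x := fun x => hode x ▸ (hs' x).hasDerivAt
  rcases le_total 0 l with hl | hl
  · exact leafInt_comp_of_nonneg hd hd' h0 h1 hl (by linarith)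
  · have h := leafInt_comp_of_nonneg (s := fun x => -s (-x)) (v := fun x => deriv s (-x))
      (l := -l) (fun x => ?_) (fun x => ?_) (by simp [h0]) (by simp [h1]) (by linarith)
      (by linarith)
    · simp only [neg_neg, leafInt_neg] at h
      linarith
    · refine ((hd (-x)).comp x (hasDerivAt_neg x)).neg.congr_deriv ?_
      ring
    · refine ((hd' (-x)).comp x (hasDerivAt_neg x)).congr_deriv ?_
      ring
end

section
/- For all real l, (s(2l))² = 4·(s(l))²·(1 − (s(l))⁶) / (1 + 8·(s(l))⁶). -/
/-!
The energy identity `s' ^ 2 + s ^ 6 = 1` gives `(s ^ 2)'' = 2 - 8 * (s ^ 2) ^ 3`, so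
`v l = s (2 * l) ^ 2` solves `v'' = 8 - 32 * v ^ 3` with `v 0 = v' 0 = 0`. A computation,
again using the energy identity, shows that the right-hand side `w` of the duplication formula
solves the same initial value problem. Both functions are bounded, so the difference
`d = v - w` satisfies a linear equation `d'' = -32 * (v ^ 2 + v * w + w ^ 2) * d` with bounded
coefficient, and a Gronwall estimate for `d ^ 2 + d' ^ 2` (`eq_zero_of_abs_deriv_le`) forces
`d = 0`.
-/

/-- A Gronwall lemma, two-sided in time: a nonnegative function vanishing at `0` whose
logarithmic derivative is bounded by `K` vanishes identically. -/
lemma eq_zero_of_abs_deriv_le (E E' : ℝ → ℝ) (K : ℝ) (hE : ∀ t, HasDerivAt E (E' t) t)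
    (hpos : ∀ t, 0 ≤ E t) (h0 : E 0 = 0) (hK : ∀ t, |E' t| ≤ K * E t) (t : ℝ) : E t = 0 := by
  have key : ∀ k t : ℝ, HasDerivAt (fun x => Real.exp (k * x) * E x)
      (Real.exp (k * t) * (k * E t + E' t)) t := fun k t => by
    have h := (((hasDerivAt_id t).const_mul k).exp).fun_mul (hE t)
    refine HasDerivAt.congr_deriv h ?_
    simp only [id]
    ring
  have hle : Real.exp (-K * t) * E t ≤ 0 ∨ Real.exp (K * t) * E t ≤ 0 := by
    rcases le_total 0 t with ht | ht
    · left
      have h : Antitone (fun x => Real.exp (-K * x) * E x) :=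
        antitone_of_hasDerivAt_nonpos (key (-K)) fun x =>
          mul_nonpos_of_nonneg_of_nonpos (Real.exp_pos _).le
            (by linarith [(abs_le.mp (hK x)).2])
      simpa [h0] using h ht
    · right
      have h : Monotone (fun x => Real.exp (K * x) * E x) :=
        monotone_of_hasDerivAt_nonneg (key K) fun x =>
          mul_nonneg (Real.exp_pos _).le (by linarith [(abs_le.mp (hK x)).1])
      simpa [h0] using h ht
  refine le_antisymm ?_ (hpos t)
  rcases hle with h | h <;> exact nonpos_of_mul_nonpos_right h (Real.exp_pos _)

/-- Uniqueness for `v'' = 8 - 32 * v ^ 3` among solutions with values in `[0, 4]` that start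
from rest at `0`. -/
lemma cubic_ode_unique (v v' w w' : ℝ → ℝ)
    (hv : ∀ t, HasDerivAt v (v' t) t) (hv' : ∀ t, HasDerivAt v' (8 - 32 * v t ^ 3) t)
    (hw : ∀ t, HasDerivAt w (w' t) t) (hw' : ∀ t, HasDerivAt w' (8 - 32 * w t ^ 3) t)
    (bv : ∀ t, 0 ≤ v t ∧ v t ≤ 4) (bw : ∀ t, 0 ≤ w t ∧ w t ≤ 4)
    (v0 : v 0 = 0) (v0' : v' 0 = 0) (w0 : w 0 = 0) (w0' : w' 0 = 0) (t : ℝ) : v t = w t := by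
  have h := eq_zero_of_abs_deriv_le
    (fun t => (v t - w t) ^ 2 + (v' t - w' t) ^ 2)
    (fun t => 2 * (v t - w t) * (v' t - w' t)
      * (1 - 32 * (v t ^ 2 + v t * w t + w t ^ 2))) 1536
    (fun t => by
      have h := (((hv t).fun_sub (hw t)).fun_pow 2).fun_add (((hv' t).fun_sub (hw' t)).fun_pow 2)
      refine HasDerivAt.congr_deriv h ?_
      push_cast
      ring)
    (fun t => by positivity) (by simp [v0, v0', w0, w0'])
    (fun t => by
      obtain ⟨a, b⟩ := bv t
      obtain ⟨c, d⟩ := bw t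
      have h1 : |1 - 32 * (v t ^ 2 + v t * w t + w t ^ 2)| ≤ 1536 := by
        rw [abs_le]
        constructor <;> nlinarith [mul_nonneg a c, mul_le_mul b d c (by norm_num : (0:ℝ) ≤ 4)]
      have h2 : |2 * (v t - w t) * (v' t - w' t)| ≤ (v t - w t) ^ 2 + (v' t - w' t) ^ 2 := by
        rw [abs_le]
        constructor <;> nlinarith [sq_nonneg ((v t - w t) + (v' t - w' t)),
          sq_nonneg ((v t - w t) - (v' t - w' t))]
      rw [abs_mul, mul_comm]
      exact mul_le_mul h1 h2 (abs_nonneg _) (by norm_num)) t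
  have h2 : (v t - w t) ^ 2 = 0 := by
    have := sq_nonneg (v' t - w' t)
    exact le_antisymm (by linarith) (sq_nonneg _)
  exact sub_eq_zero.mp (pow_eq_zero_iff (by norm_num) |>.mp h2)

theorem stmt_7 (s : ℝ → ℝ)
    (hs : Differentiable ℝ s) (hs' : Differentiable ℝ (deriv s))
    (hode : ∀ l : ℝ, deriv (deriv s) l = -3 * s l ^ 5)
    (h0 : s 0 = 0) (h1 : deriv s 0 = 1) :
    ∀ l : ℝ, (s (2 * l)) ^ 2 = 4 * (s l) ^ 2 * (1 - (s l) ^ 6) / (1 + 8 * (s l) ^ 6) := by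
  set c := deriv s with hc
  have ds : ∀ t, HasDerivAt s (c t) t := fun t => (hs t).hasDerivAt
  have dc : ∀ t, HasDerivAt c (-3 * s t ^ 5) t := fun t => hode t ▸ (hs' t).hasDerivAt
  have energy : ∀ t, c t ^ 2 = 1 - s t ^ 6 := by
    have hd : ∀ t, HasDerivAt (fun x => c x ^ 2 + s x ^ 6) 0 t := fun t => by
      refine HasDerivAt.congr_deriv (((dc t).fun_pow 2).fun_add ((ds t).fun_pow 6)) ?_
      push_cast
      ring
    intro t
    have h := is_const_of_deriv_eq_zero (fun x => (hd x).differentiableAt)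
      (fun x => (hd x).deriv) t 0
    simp only [h0, h1] at h
    linarith
  have h6 : ∀ t, 0 ≤ s t ^ 6 := fun t => by positivity
  have h6' : ∀ t, s t ^ 6 ≤ 1 := fun t => by nlinarith [energy t, sq_nonneg (c t)]
  have h2 : ∀ t, s t ^ 2 ≤ 1 := fun t => by
    by_contra! h
    have := one_lt_pow₀ h (three_ne_zero)
    have := h6' t
    nlinarith
  have d2 : ∀ t : ℝ, HasDerivAt (fun x : ℝ => 2 * x) 2 t := fun t => by
    simpa using (hasDerivAt_id t).const_mul (2 : ℝ)
  have hD : ∀ t, (1 + 8 * s t ^ 6) ≠ 0 := fun t => by positivity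
  have dD : ∀ t, HasDerivAt (fun x => 1 + 8 * s x ^ 6) (48 * s t ^ 5 * c t) t := fun t => by
    refine HasDerivAt.congr_deriv ((((ds t).fun_pow 6).const_mul 8).const_add 1) ?_
    push_cast
    ring
  refine cubic_ode_unique (fun t => s (2 * t) ^ 2) (fun t => 4 * s (2 * t) * c (2 * t))
    (fun t => 4 * s t ^ 2 * (1 - s t ^ 6) / (1 + 8 * s t ^ 6))
    -- the derivative of the previous function, by the quotient rule
    (fun t => 8 * s t * c t * (1 - 20 * s t ^ 6 - 8 * s t ^ 12) / (1 + 8 * s t ^ 6) ^ 2)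
    ?_ ?_ ?_ ?_ ?_ ?_ ?_ ?_ ?_ ?_
  · intro t
    refine HasDerivAt.congr_deriv (((ds (2 * t)).comp t (d2 t)).fun_pow 2) ?_
    simp only [Function.comp]
    push_cast
    ring
  · intro t
    refine HasDerivAt.congr_deriv ((((ds (2 * t)).comp t (d2 t)).const_mul 4).fun_mul
      ((dc (2 * t)).comp t (d2 t))) ?_
    simp only [Function.comp]
    linear_combination 8 * energy (2 * t)
  · intro t
    refine HasDerivAt.congr_deriv (((((ds t).fun_pow 2).const_mul 4).fun_mul
      (((ds t).fun_pow 6).const_sub 1)).fun_div (dD t) (hD t)) ?_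
    have := hD t
    field_simp
    push_cast
    ring
  · intro t
    refine HasDerivAt.congr_deriv (((((ds t).const_mul 8).fun_mul (dc t)).fun_mul
      ((((ds t).fun_pow 6).const_mul 20).const_sub 1 |>.fun_sub (((ds t).fun_pow 12).const_mul 8))).fun_div
      ((dD t).fun_pow 2) (pow_ne_zero 2 (hD t))) ?_
    have := hD t
    have e := energy t
    field_simp
    push_cast
    ring_nf
    -- `c t` occurs only squared here; the energy identity eliminates it
    simp only [e]
    ring
  · intro t
    exact ⟨by positivity, by linarith [h2 (2 * t)]⟩
  · intro t
    have hp : (0:ℝ) < 1 + 8 * s t ^ 6 := by positivity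
    refine ⟨div_nonneg (mul_nonneg (by positivity) (by linarith [h6' t])) hp.le, ?_⟩
    rw [div_le_iff₀ hp]
    nlinarith [h2 t, h6 t, mul_nonneg (sq_nonneg (s t)) (h6 t)]
  all_goals simp [h0]
end

section
/- For every integer m and every real l with (2m − 1/2)·π₃ ≤ l ≤ (2m + 1/2)·π₃, one has s(2l) = 2·s(l)·√(1 − (s(l))⁶) / √(1 + 8·(s(l))⁶). -/
/-!
Write `p = s'`. The energy identity `p ^ 2 + s ^ 6 = 1` bounds `s` and `p`. The function
`f l = 2 * s l * p l / √(1 + 8 * s l ^ 6)` satisfies `f'' = -12 * f ^ 5`, `f 0 = 0`, `f' 0 = 2`,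
exactly as `l ↦ s (2 * l)` does. Since `x ↦ x ^ 5` is Lipschitz on bounded sets, the two bounded
functions agree (`quintic_unique`), so that `s (2 * l) = 2 * s l * p l / √(1 + 8 * s l ^ 6)` holds
for every real `l` (`sleaf_double`).

It remains to see that `p l = √(1 - s l ^ 6)`, that is `0 ≤ p l`, on the given intervals. As long as
`p > 0` on `[0, T)`, the substitution `u = s t` gives `T = ∫ u in 0..s T, 1 / √(1 - u ^ 6)`
(`sleaf_time`). Consequently `p` has no zero before the quarter period `π₃ / 2`, and `s` takes the
value `1` there. Uniqueness then makes `s` odd and symmetric about `π₃ / 2`, hence `2 * π₃`-periodic,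
which carries the sign of `p` from `[0, π₃ / 2]` to all the intervals.
-/

open Set MeasureTheory

/-- Bounded solutions of `u'' = -c * u ^ 5` are determined by their value and derivative at one
point. -/
lemma quintic_unique {c M t₀ : ℝ} {u u' v v' : ℝ → ℝ}
    (hu : ∀ t, HasDerivAt u (u' t) t) (hu' : ∀ t, HasDerivAt u' (-c * u t ^ 5) t)
    (hv : ∀ t, HasDerivAt v (v' t) t) (hv' : ∀ t, HasDerivAt v' (-c * v t ^ 5) t)
    (hub : ∀ t, |u t| ≤ M) (hvb : ∀ t, |v t| ≤ M)
    (h : u t₀ = v t₀) (h' : u' t₀ = v' t₀) : u = v := by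
  have hM : 0 ≤ M := (abs_nonneg _).trans (hub t₀)
  have key : (fun t => (u t, u' t)) = fun t => (v t, v' t) := by
    refine ODE_solution_unique_univ (v := fun _ q => (q.2, -c * q.1 ^ 5))
      (s := fun _ => {q : ℝ × ℝ | |q.1| ≤ M}) (K := (max 1 (|c| * (5 * M ^ 4))).toNNReal)
      (t₀ := t₀) ?_ ?_ ?_ ?_
    · intro _
      refine LipschitzOnWith.of_dist_le_mul ?_
      rintro ⟨x, y⟩ hx ⟨z, w⟩ hz
      simp only [mem_ofPred_eq] at hx hz
      rw [Real.coe_toNNReal _ (le_max_of_le_left zero_le_one)]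
      simp only [Prod.dist_eq, Real.dist_eq]
      refine max_le ?_ ?_
      · calc |y - w| ≤ max |x - z| |y - w| := le_max_right _ _
          _ = 1 * max |x - z| |y - w| := (one_mul _).symm
          _ ≤ _ := by gcongr; exact le_max_left _ _
      · have e : -c * x ^ 5 - -c * z ^ 5
            = -c * (x ^ 4 + x ^ 3 * z + x ^ 2 * z ^ 2 + x * z ^ 3 + z ^ 4) * (x - z) := by ring
        have hb : |x ^ 4 + x ^ 3 * z + x ^ 2 * z ^ 2 + x * z ^ 3 + z ^ 4| ≤ 5 * M ^ 4 := by
          calc _ ≤ |x ^ 4| + |x ^ 3 * z| + |x ^ 2 * z ^ 2| + |x * z ^ 3| + |z ^ 4| := by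
                  refine (abs_add_le _ _).trans ?_
                  gcongr
                  refine (abs_add_le _ _).trans ?_
                  gcongr
                  exact abs_add_three _ _ _
            _ = |x| ^ 4 + |x| ^ 3 * |z| + |x| ^ 2 * |z| ^ 2 + |x| * |z| ^ 3 + |z| ^ 4 := by
                  simp only [abs_mul, abs_pow]
            _ ≤ M ^ 4 + M ^ 3 * M + M ^ 2 * M ^ 2 + M * M ^ 3 + M ^ 4 := by gcongr
            _ = _ := by ring
        rw [e, abs_mul, abs_mul, abs_neg]
        calc _ ≤ |c| * (5 * M ^ 4) * |x - z| := by gcongr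
          _ ≤ _ := by
            gcongr
            · exact le_max_right _ _
            · exact le_max_left _ _
    · exact fun t => ⟨(hu t).prodMk (hu' t), hub t⟩
    · exact fun t => ⟨(hv t).prodMk (hv' t), hvb t⟩
    · simp [h, h']
  funext t
  exact congrArg Prod.fst (congrFun key t)

section

variable {s p : ℝ → ℝ}

lemma sleaf_energy (hs : ∀ l, HasDerivAt s (p l) l) (hp : ∀ l, HasDerivAt p (-3 * s l ^ 5) l)
    (h0 : s 0 = 0) (h1 : p 0 = 1) (l : ℝ) : p l ^ 2 = 1 - s l ^ 6 := by
  have hd : ∀ t, HasDerivAt (fun t => p t ^ 2 + s t ^ 6) 0 t := fun t => by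
    refine (((hp t).fun_pow 2).add ((hs t).fun_pow 6)).congr_deriv ?_
    push_cast
    ring
  have := is_const_of_deriv_eq_zero (fun t => (hd t).differentiableAt) (fun t => (hd t).deriv) l 0
  simp only [h0, h1] at this
  linarith

lemma sleaf_abs_le_one (he : ∀ l, p l ^ 2 = 1 - s l ^ 6) (l : ℝ) : |s l| ≤ 1 := by
  have h : |s l| ^ 6 ≤ 1 := by
    rw [← abs_pow, abs_of_nonneg (by positivity)]
    nlinarith [he l, sq_nonneg (p l)]
  exact (pow_le_one_iff_of_nonneg (abs_nonneg _) (by norm_num)).1 h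

lemma sleaf_deriv_abs_le_one (he : ∀ l, p l ^ 2 = 1 - s l ^ 6) (l : ℝ) : |p l| ≤ 1 := by
  have : 0 ≤ s l ^ 6 := by positivity
  exact (sq_le_one_iff_abs_le_one _).1 (by linarith [he l])

/-- The duplication formula in terms of `s' = p`, valid on the whole line. -/
lemma sleaf_double (hs : ∀ l, HasDerivAt s (p l) l) (hp : ∀ l, HasDerivAt p (-3 * s l ^ 5) l)
    (h0 : s 0 = 0) (h1 : p 0 = 1) (l : ℝ) :
    s (2 * l) = 2 * s l * p l / Real.sqrt (1 + 8 * s l ^ 6) := by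
  have he := sleaf_energy hs hp h0 h1
  set r : ℝ → ℝ := fun l => Real.sqrt (1 + 8 * s l ^ 6) with hr
  have hD : ∀ l, 0 < 1 + 8 * s l ^ 6 := fun l => by positivity
  have hr0 : ∀ l, 0 < r l := fun l => Real.sqrt_pos.2 (hD l)
  have hr2 : ∀ l, r l ^ 2 = 1 + 8 * s l ^ 6 := fun l => Real.sq_sqrt (hD l).le
  have hrd : ∀ l, HasDerivAt r (24 * s l ^ 5 * p l / r l) l := fun l => by
    refine (((((hs l).fun_pow 6).const_mul 8).const_add 1).sqrt (hD l).ne').congr_deriv ?_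
    have := (hr0 l).ne'
    change _ / (2 * r l) = _
    field_simp
    push_cast
    ring
  have hmul : ∀ t, HasDerivAt (fun t : ℝ => 2 * t) 2 t := fun t => by
    simpa using (hasDerivAt_id t).const_mul 2
  have key : (fun t => s (2 * t)) = fun t => 2 * s t * p t / r t := by
    refine quintic_unique (c := 12) (M := 2) (t₀ := 0) (u' := fun t => 2 * p (2 * t))
      (v' := fun t => (2 - 40 * s t ^ 6 - 16 * s t ^ 12) / r t ^ 3) ?_ ?_ ?_ ?_ ?_ ?_ ?_ ?_
    · intro t
      exact ((hs (2 * t)).comp t (hmul t)).congr_deriv (by ring)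
    · intro t
      exact (((hp (2 * t)).comp t (hmul t)).const_mul 2).congr_deriv (by ring)
    · intro t
      refine ((((hs t).const_mul 2).mul (hp t)).fun_div (hrd t) (hr0 t).ne').congr_deriv ?_
      have h3 := (hr0 t).ne'
      have e2 := hr2 t
      have e := he t
      simp only [Pi.mul_apply]
      field_simp
      linear_combination (2 * p t ^ 2 - 6 * s t ^ 6) * e2
        + (2 + 16 * s t ^ 6 - 48 * s t ^ 6) * e
    · intro t
      refine (((((hs t).fun_pow 6).const_mul 40).const_sub 2 |>.sub
        (((hs t).fun_pow 12).const_mul 16)).fun_div ((hrd t).fun_pow 3)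
        (pow_ne_zero 3 (hr0 t).ne')).congr_deriv ?_
      have h3 := (hr0 t).ne'
      have e2 := hr2 t
      have e4 : p t ^ 4 = (1 - s t ^ 6) ^ 2 := by rw [← he t]; ring
      push_cast
      simp only [Pi.sub_apply]
      field_simp
      linear_combination s t ^ 5 * p t * (-240 - 192 * s t ^ 6) * e2 + 384 * s t ^ 5 * p t * e4
    · intro t
      exact (sleaf_abs_le_one he _).trans (by norm_num)
    · intro t
      have h1r : 1 ≤ r t := Real.one_le_sqrt.2 (by have : 0 ≤ s t ^ 6 := by positivity
                                                   linarith)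
      rw [abs_div, abs_mul, abs_mul, abs_of_pos (hr0 t), abs_two, div_le_iff₀ (hr0 t)]
      nlinarith [sleaf_abs_le_one he t, sleaf_deriv_abs_le_one he t, abs_nonneg (s t),
        abs_nonneg (p t)]
    · simp [h0]
    · simp [hr, h0, h1]
  exact congrFun key l

lemma integrableOn_leaf :
    IntegrableOn (fun t : ℝ => 1 / Real.sqrt (1 - t ^ 6)) (Icc 0 1) := by
  have h : IntervalIntegrable (fun t : ℝ => (1 - t) ^ (-(1 / 2) : ℝ)) volume 0 1 := by
    have := (intervalIntegral.intervalIntegrable_rpow' (a := 1) (b := 0)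
      (r := -(1 / 2)) (by norm_num)).comp_sub_left 1
    simpa using this
  rw [intervalIntegrable_iff_integrableOn_Icc_of_le zero_le_one] at h
  refine h.mono' (Measurable.aestronglyMeasurable (by fun_prop)) ?_
  refine (ae_restrict_mem measurableSet_Icc).mono fun t ht => ?_
  rw [Real.norm_of_nonneg (by positivity)]
  rcases ht.2.eq_or_lt with rfl | ht1
  · simp
  rw [Real.rpow_neg (by linarith), ← Real.sqrt_eq_rpow, one_div]
  have h6 : t ^ 6 ≤ t := pow_le_of_le_one ht.1 ht.2 (by norm_num)
  have : 0 < Real.sqrt (1 - t) := Real.sqrt_pos.2 (by linarith)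
  gcongr

/-- If `p > 0` on `[0, T)`, then `T` is recovered from `s T` by the elliptic-type integral. -/
lemma sleaf_time (hs : ∀ l, HasDerivAt s (p l) l) (he : ∀ l, p l ^ 2 = 1 - s l ^ 6)
    (h0 : s 0 = 0) {T : ℝ} (hT : 0 ≤ T) (hpos : ∀ t ∈ Ico 0 T, 0 < p t) :
    0 ≤ s T ∧ T = ∫ u in (0 : ℝ)..s T, 1 / Real.sqrt (1 - u ^ 6) := by
  have hcont : Continuous s := continuous_iff_continuousAt.2 fun t => (hs t).continuousAt
  have hmono : MonotoneOn s (Icc 0 T) := by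
    refine monotoneOn_of_deriv_nonneg (convex_Icc 0 T) hcont.continuousOn
      (fun t _ => (hs t).differentiableAt.differentiableWithinAt) fun t ht => ?_
    rw [interior_Icc] at ht
    rw [(hs t).deriv]
    exact (hpos t ⟨ht.1.le, ht.2⟩).le
  have hnn : ∀ t ∈ Icc 0 T, 0 ≤ s t := fun t ht => by
    simpa [h0] using hmono ⟨le_rfl, hT⟩ ht ht.1
  refine ⟨hnn T ⟨hT, le_rfl⟩, ?_⟩
  have hone : ∀ t ∈ Ico 0 T, 1 / Real.sqrt (1 - s t ^ 6) * p t = 1 := fun t ht => by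
    have h := hpos t ht
    rw [← he t, Real.sqrt_sq h.le, one_div_mul_cancel h.ne']
  have hae : ∀ᵐ t, t ≠ T := by simp [ae_iff]
  have hsub := intervalIntegral.integral_comp_mul_deriv''' (a := 0) (b := T) (f := s) (f' := p)
    (g := fun u => 1 / Real.sqrt (1 - u ^ 6)) hcont.continuousOn
    (fun t _ => (hs t).hasDerivWithinAt) ?_ ?_ ?_
  · rw [h0] at hsub
    rw [← hsub]
    have : ∫ t in (0 : ℝ)..T, ((fun u => 1 / Real.sqrt (1 - u ^ 6)) ∘ s) t * p t
        = ∫ _t in (0 : ℝ)..T, (1 : ℝ) := by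
      refine intervalIntegral.integral_congr_ae (hae.mono fun t ht hmem => ?_)
      rw [uIoc_of_le hT] at hmem
      exact hone t ⟨hmem.1.le, lt_of_le_of_ne hmem.2 ht⟩
    rw [this]
    simp
  · rw [min_eq_left hT, max_eq_right hT]
    rintro _ ⟨t, ht, rfl⟩
    have h := hpos t ⟨ht.1.le, ht.2⟩
    refine ContinuousAt.continuousWithinAt ?_
    refine continuousAt_const.div (by fun_prop) ?_
    rw [← he t, Real.sqrt_sq h.le]
    exact h.ne'
  · refine integrableOn_leaf.mono_set ?_
    rw [uIcc_of_le hT]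
    rintro _ ⟨t, ht, rfl⟩
    exact ⟨hnn t ht, (le_abs_self _).trans (sleaf_abs_le_one he t)⟩
  · rw [uIcc_of_le hT, integrableOn_Icc_iff_integrableOn_Ico]
    refine IntegrableOn.congr_fun (f := fun _ => (1 : ℝ)) ?_ (fun t ht => (hone t ht).symm)
      measurableSet_Ico
    simp

/-- Before the quarter period `A`, the derivative of `s` is positive; at `A`, `s` equals `1`. -/
lemma sleaf_quarter (hs : ∀ l, HasDerivAt s (p l) l) (hpc : Continuous p)
    (he : ∀ l, p l ^ 2 = 1 - s l ^ 6) (h0 : s 0 = 0) (h1 : p 0 = 1) {A : ℝ}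
    (hA : A = ∫ t in (0 : ℝ)..1, 1 / Real.sqrt (1 - t ^ 6)) :
    0 ≤ A ∧ (∀ t ∈ Ico 0 A, 0 < p t) ∧ s A = 1 := by
  have hA0 : 0 ≤ A := by
    rw [hA]
    exact intervalIntegral.integral_nonneg zero_le_one fun t _ => by positivity
  have hpos : ∀ t ∈ Ico 0 A, 0 < p t := by
    by_contra! hcon
    obtain ⟨t, ht, hpt⟩ := hcon
    -- `T` is the first time at which `p` fails to be positive.
    set S : Set ℝ := Ici 0 ∩ p ⁻¹' Iic 0 with hS
    have hScl : IsClosed S := isClosed_Ici.inter (isClosed_Iic.preimage hpc)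
    have hbdd : BddBelow S := ⟨0, fun x hx => hx.1⟩
    have htS : t ∈ S := ⟨ht.1, hpt⟩
    obtain ⟨hT0, hTp⟩ := hScl.csInf_mem ⟨t, htS⟩ hbdd
    set T := sInf S
    have hTA : T < A := (csInf_le hbdd htS).trans_lt ht.2
    have hbefore : ∀ x ∈ Ico 0 T, 0 < p x := fun x hx => by
      by_contra! hx'
      exact (csInf_le hbdd (show x ∈ S from ⟨hx.1, hx'⟩)).not_gt hx.2
    have hTpos : 0 < T := by
      refine lt_of_le_of_ne hT0 fun h => ?_
      rw [← h] at hTp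
      simp only [mem_preimage, h1, mem_Iic] at hTp
      linarith
    have hTnn : 0 ≤ p T := by
      have hcl : T ∈ closure (Ico 0 T) := by
        rw [closure_Ico hTpos.ne]
        exact ⟨hT0, le_rfl⟩
      exact (isClosed_Ici.preimage hpc).closure_subset_iff.2
        (fun x hx => (hbefore x hx).le) hcl
    have hTz : p T = 0 := le_antisymm hTp hTnn
    obtain ⟨hsT, hint⟩ := sleaf_time hs he h0 hT0 hbefore
    have hs1 : s T = 1 := by
      have := he T
      rw [hTz] at this
      exact (pow_eq_one_iff_of_nonneg hsT (by norm_num : (6 : ℕ) ≠ 0)).1 (by linarith)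
    rw [hs1, ← hA] at hint
    exact hTA.ne hint
  refine ⟨hA0, hpos, ?_⟩
  obtain ⟨hsA, hint⟩ := sleaf_time hs he h0 hA0 hpos
  have hle : s A ≤ 1 := (le_abs_self _).trans (sleaf_abs_le_one he A)
  -- The integrand is at least `1`, so a gap between `s A` and `1` would separate the integrals.
  have hii : ∀ a b : ℝ, 0 ≤ a → a ≤ b → b ≤ 1 →
      IntervalIntegrable (fun t : ℝ => 1 / Real.sqrt (1 - t ^ 6)) volume a b := by
    intro a b ha hab hb
    rw [intervalIntegrable_iff_integrableOn_Icc_of_le hab]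
    exact integrableOn_leaf.mono_set (Icc_subset_Icc ha hb)
  have hadd := intervalIntegral.integral_add_adjacent_intervals (hii 0 (s A) le_rfl hsA hle)
    (hii (s A) 1 hsA hle le_rfl)
  have hge : ∫ _t in s A..1, (1 : ℝ) ≤ ∫ t in s A..1, 1 / Real.sqrt (1 - t ^ 6) := by
    refine intervalIntegral.integral_mono_on_of_le_Ioo hle (by simp) (hii (s A) 1 hsA hle le_rfl)
      fun t ht => ?_
    have ht0 : 0 ≤ t := hsA.trans ht.1.le
    have : t ^ 6 < 1 := pow_lt_one₀ ht0 ht.2 (by norm_num)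
    rw [le_div_iff₀ (Real.sqrt_pos.2 (by linarith)), one_mul]
    exact Real.sqrt_le_one.2 (by have : 0 ≤ t ^ 6 := by positivity
                                 linarith)
  simp only [intervalIntegral.integral_const, smul_eq_mul, mul_one] at hge
  linarith

lemma sleaf_odd (hs : ∀ l, HasDerivAt s (p l) l) (hp : ∀ l, HasDerivAt p (-3 * s l ^ 5) l)
    (he : ∀ l, p l ^ 2 = 1 - s l ^ 6) (h0 : s 0 = 0) (l : ℝ) : s (-l) = -s l := by
  have key : (fun t => s (-t)) = fun t => -s t := by
    refine quintic_unique (c := 3) (M := 1) (t₀ := 0) (u' := fun t => -p (-t))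
      (v' := fun t => -p t) ?_ ?_ ?_ ?_ ?_ ?_ ?_ ?_
    · exact fun t => ((hs (-t)).comp t (hasDerivAt_neg t)).congr_deriv (by ring)
    · exact fun t => ((hp (-t)).comp t (hasDerivAt_neg t)).neg.congr_deriv (by ring)
    · exact fun t => (hs t).neg
    · exact fun t => (hp t).neg.congr_deriv (by ring)
    · exact fun t => sleaf_abs_le_one he _
    · exact fun t => by rw [abs_neg]; exact sleaf_abs_le_one he t
    · simp [h0]
    · simp
  exact congrFun key l

lemma sleaf_reflect (hs : ∀ l, HasDerivAt s (p l) l) (hp : ∀ l, HasDerivAt p (-3 * s l ^ 5) l)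
    (he : ∀ l, p l ^ 2 = 1 - s l ^ 6) {A : ℝ} (hA : s A = 1) (l : ℝ) : s (2 * A - l) = s l := by
  have hpA : p A = 0 := by
    have := he A
    rw [hA] at this
    simpa using this
  have hsub : ∀ t, HasDerivAt (fun t : ℝ => 2 * A - t) (-1) t := fun t =>
    (hasDerivAt_id t).const_sub (2 * A)
  have e : 2 * A - A = A := by ring
  have key : (fun t => s (2 * A - t)) = s := by
    refine quintic_unique (c := 3) (M := 1) (t₀ := A) (u' := fun t => -p (2 * A - t))
      (v' := p) ?_ ?_ hs hp ?_ ?_ ?_ ?_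
    · exact fun t => ((hs (2 * A - t)).comp t (hsub t)).congr_deriv (by ring)
    · exact fun t => ((hp (2 * A - t)).comp t (hsub t)).neg.congr_deriv (by ring)
    · exact fun t => sleaf_abs_le_one he _
    · exact fun t => sleaf_abs_le_one he _
    · simp [e]
    · simp [e, hpA]
  exact congrFun key l

end

theorem stmt_8 (s : ℝ → ℝ)
    (hs : Differentiable ℝ s) (hs' : Differentiable ℝ (deriv s))
    (hode : ∀ l : ℝ, deriv (deriv s) l = -3 * s l ^ 5)
    (h0 : s 0 = 0) (h1 : deriv s 0 = 1)
    (π₃ : ℝ) (hπ₃ : π₃ = 2 * ∫ t in (0 : ℝ)..1, 1 / Real.sqrt (1 - t ^ 6)) :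
    ∀ (m : ℤ) (l : ℝ), (2 * (m : ℝ) - 1 / 2) * π₃ ≤ l → l ≤ (2 * (m : ℝ) + 1 / 2) * π₃ →
      s (2 * l) = 2 * s l * Real.sqrt (1 - (s l) ^ 6) / Real.sqrt (1 + 8 * (s l) ^ 6) := by
  intro m l hl1 hl2
  have hd : ∀ l, HasDerivAt s (deriv s l) l := fun l => (hs l).hasDerivAt
  have hd' : ∀ l, HasDerivAt (deriv s) (-3 * s l ^ 5) l := fun l => hode l ▸ (hs' l).hasDerivAt
  have he := sleaf_energy hd hd' h0 h1
  obtain ⟨-, hpos, hsA⟩ := sleaf_quarter (A := π₃ / 2) hd hs'.continuous he h0 h1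
    (by rw [hπ₃]; ring)
  have hodd := sleaf_odd hd hd' he h0
  have hrefl := sleaf_reflect hd hd' he hsA
  have hper : Function.Periodic s (2 * π₃) := fun x => by
    rw [← hrefl, show 2 * (π₃ / 2) - (x + 2 * π₃) = -(2 * (π₃ / 2) - -x) by ring, hodd, hrefl,
      hodd, neg_neg]
  have hperd : Function.Periodic (deriv s) (2 * π₃) := fun x => by
    rw [← deriv_comp_add_const, funext hper]
  have heven : ∀ x, deriv s (-x) = deriv s x := fun x => by
    have h := (hd (-x)).comp x (hasDerivAt_neg x)
    have h2 : s ∘ Neg.neg = fun t => -s t := funext hodd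
    rw [show (s ∘ fun y => -y) = fun t => -s t from h2] at h
    have := h.unique (hd x).neg
    linarith
  have hnn : ∀ x ∈ Icc 0 (π₃ / 2), 0 ≤ deriv s x := fun x hx => by
    rcases hx.2.eq_or_lt with rfl | hlt
    · have := he (π₃ / 2)
      rw [hsA] at this
      have : deriv s (π₃ / 2) = 0 := by simpa using this
      exact this.ge
    · exact (hpos x ⟨hx.1, hlt⟩).le
  have hshift : deriv s (l - m * (2 * π₃)) = deriv s l := hperd.sub_int_mul_eq m
  have hnonneg : 0 ≤ deriv s l := by
    rw [← hshift]
    rcases le_total 0 (l - m * (2 * π₃)) with h | h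
    · exact hnn _ ⟨h, by linarith⟩
    · rw [← heven]
      exact hnn _ ⟨by linarith, by linarith⟩
  rw [sleaf_double hd hd' h0 h1 l, ← he l, Real.sqrt_sq hnonneg]
end

section
/- For every integer m and every real l with (2m + 1/2)·π₃ ≤ l ≤ (2m + 3/2)·π₃, one has s(2l) = −2·s(l)·√(1 − (s(l))⁶) / √(1 + 8·(s(l))⁶). -/
/-!
The energy `s'² + s⁶` is constant, so every solution with unit energy stays in the square
`[-1, 1]²` of the phase plane, where the vector field is Lipschitz; hence such solutions are
determined by their value and velocity at one point (`IsLeaf.unique`). Three uses of this uniqueness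
carry the proof.

* The function `x ↦ 2 s s' / √(1 + 8 s⁶)` evaluated at `x / 2` solves the same initial value problem
  as `s`, which gives the duplication formula `s(2l) = 2 s(l) s'(l) / √(1 + 8 s(l)⁶)`.
* `s` is odd, so `s'` is even.
* If `T` is the first positive zero of `s'`, then `s` is symmetric about `T`, so
  `s'(2T - x) = -s'(x)` and `s'` is `2T`-antiperiodic.

On `[0, T]` the function `s` increases from `0` to `1` with `s' = √(1 - s⁶)`, and the change of
variables `t = s(l)` gives `∫₀¹ dt/√(1 - t⁶) = T`, that is `π₃ = 2T`. Therefore `s' ≤ 0` on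
`[(4m+1)T, (4m+3)T]`, where `s' = -√(1 - s⁶)`.
-/

open Set MeasureTheory

/-- `(F, G)` is a unit-energy trajectory of the first-order system `F' = G`, `G' = -3 F⁵`. -/
structure IsLeaf (F G : ℝ → ℝ) : Prop where
  pos : ∀ t, HasDerivAt F (G t) t
  vel : ∀ t, HasDerivAt G (-3 * F t ^ 5) t
  energy : ∀ t, G t ^ 2 + F t ^ 6 = 1

/-- Conservation of energy: it suffices to know the energy at one time. -/
lemma IsLeaf.of_energy_at {F G : ℝ → ℝ} (hF : ∀ t, HasDerivAt F (G t) t)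
    (hG : ∀ t, HasDerivAt G (-3 * F t ^ 5) t) (t₀ : ℝ) (h : G t₀ ^ 2 + F t₀ ^ 6 = 1) :
    IsLeaf F G := by
  refine ⟨hF, hG, fun t => ?_⟩
  have hd : ∀ x, HasDerivAt (fun x => G x ^ 2 + F x ^ 6) 0 x := fun x => by
    refine (((hG x).pow 2).add ((hF x).pow 6)).congr_deriv ?_
    push_cast
    ring
  rw [← h]
  exact is_const_of_deriv_eq_zero (fun x => (hd x).differentiableAt) (fun x => (hd x).deriv) t t₀

lemma IsLeaf.abs_pos_le {F G : ℝ → ℝ} (h : IsLeaf F G) (t : ℝ) : |F t| ≤ 1 := by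
  have h1 : |F t| ^ 6 ≤ 1 := by
    rw [Even.pow_abs (by decide)]
    nlinarith [h.energy t, sq_nonneg (G t)]
  exact (pow_le_one_iff_of_nonneg (abs_nonneg _) (by norm_num)).1 h1

lemma IsLeaf.abs_vel_le {F G : ℝ → ℝ} (h : IsLeaf F G) (t : ℝ) : |G t| ≤ 1 := by
  rw [← sq_le_one_iff_abs_le_one]
  have : 0 ≤ F t ^ 6 := by positivity
  linarith [h.energy t]

/-- A unit-energy trajectory is determined by its state at one time. -/
lemma IsLeaf.unique {F G F₂ G₂ : ℝ → ℝ} (h : IsLeaf F G) (h₂ : IsLeaf F₂ G₂) (t₀ : ℝ)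
    (hF : F t₀ = F₂ t₀) (hG : G t₀ = G₂ t₀) : F = F₂ ∧ G = G₂ := by
  have hK : IsCompact (Icc (-1 : ℝ) 1 ×ˢ Icc (-1 : ℝ) 1) := isCompact_Icc.prod isCompact_Icc
  have hv : ContDiff ℝ 1 (fun p : ℝ × ℝ => (p.2, -3 * p.1 ^ 5)) := by fun_prop
  obtain ⟨K, hLip⟩ :=
    (hv.locallyLipschitz.locallyLipschitzOn
      (s := Icc (-1 : ℝ) 1 ×ˢ Icc (-1 : ℝ) 1)).exists_lipschitzOnWith_of_compact hK
  have key : (fun t => (F t, G t)) = fun t => (F₂ t, G₂ t) :=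
    ODE_solution_unique_univ (v := fun _ p => (p.2, -3 * p.1 ^ 5))
      (s := fun _ => Icc (-1 : ℝ) 1 ×ˢ Icc (-1 : ℝ) 1) (t₀ := t₀) (fun _ => hLip)
      (fun t => ⟨(h.pos t).prodMk (h.vel t), abs_le.1 (h.abs_pos_le t), abs_le.1 (h.abs_vel_le t)⟩)
      (fun t => ⟨(h₂.pos t).prodMk (h₂.vel t), abs_le.1 (h₂.abs_pos_le t),
        abs_le.1 (h₂.abs_vel_le t)⟩)
      (by simp [hF, hG])
  exact ⟨funext fun t => congrArg Prod.fst (congrFun key t),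
    funext fun t => congrArg Prod.snd (congrFun key t)⟩

/-- Reflection in time about `a / 2`. -/
lemma IsLeaf.reflect {F G : ℝ → ℝ} (h : IsLeaf F G) (a : ℝ) :
    IsLeaf (fun x => F (a - x)) (fun x => -G (a - x)) := by
  refine ⟨fun t => ?_, fun t => ?_, fun t => by rw [neg_sq]; exact h.energy _⟩
  · exact (h.pos (a - t)).comp_const_sub a t
  · exact ((h.vel (a - t)).comp_const_sub a t).neg.congr_deriv (by ring)

lemma IsLeaf.neg {F G : ℝ → ℝ} (h : IsLeaf F G) :
    IsLeaf (fun x => -F x) (fun x => -G x) := by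
  refine ⟨fun t => (h.pos t).neg, fun t => (h.vel t).neg.congr_deriv (by ring), fun t => ?_⟩
  rw [neg_sq, Even.neg_pow (by decide)]
  exact h.energy t

/-- `2 s s' / √(1 + 8 s⁶)`, run at half speed, is again a trajectory. -/
lemma IsLeaf.double {F G : ℝ → ℝ} (h : IsLeaf F G) (h0 : F 0 = 0) :
    IsLeaf (fun x => 2 * F (x / 2) * G (x / 2) / √(1 + 8 * F (x / 2) ^ 6))
      (fun x => (1 - 20 * F (x / 2) ^ 6 - 8 * F (x / 2) ^ 12) / √(1 + 8 * F (x / 2) ^ 6) ^ 3) := by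
  have hD : ∀ x, 0 < 1 + 8 * F x ^ 6 := fun x => by positivity
  have hr : ∀ x, HasDerivAt (fun x => √(1 + 8 * F x ^ 6))
      (24 * F x ^ 5 * G x / √(1 + 8 * F x ^ 6)) x := fun x => by
    refine (((((h.pos x).pow 6).const_mul 8).const_add 1).sqrt (hD x).ne').congr_deriv ?_
    have hrp := Real.sqrt_pos.2 (hD x)
    push_cast
    simp only [Pi.pow_apply]
    rw [div_eq_div_iff (by positivity) hrp.ne']
    ring
  have hhalf : ∀ t : ℝ, HasDerivAt (fun x : ℝ => x / 2) (1 / 2) t := fun t =>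
    (hasDerivAt_id t).div_const 2
  refine .of_energy_at (fun t => ?_) (fun t => ?_) 0 (by simp [h0])
  · have hrp := Real.sqrt_pos.2 (hD (t / 2))
    have hsq := Real.sq_sqrt (hD (t / 2)).le
    have hE := h.energy (t / 2)
    have := ((((h.pos (t / 2)).const_mul 2).mul (h.vel (t / 2))).div (hr (t / 2)) hrp.ne')
    refine (this.comp t (hhalf t)).congr_deriv ?_
    simp only [Pi.mul_apply]
    generalize √(1 + 8 * F (t / 2) ^ 6) = r at *
    generalize F (t / 2) = x at *
    generalize G (t / 2) = y at *
    field_simp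
    rw [hsq, show y ^ 2 = 1 - x ^ 6 by linarith]
    ring
  · have hrp := Real.sqrt_pos.2 (hD (t / 2))
    have hsq := Real.sq_sqrt (hD (t / 2)).le
    have hE := h.energy (t / 2)
    have := (((((h.pos (t / 2)).pow 6).const_mul 20).const_sub 1).sub
      (((h.pos (t / 2)).pow 12).const_mul 8)).div ((hr (t / 2)).pow 3) (pow_pos hrp 3).ne'
    refine (this.comp t (hhalf t)).congr_deriv ?_
    simp only [Pi.sub_apply, Pi.pow_apply]
    generalize √(1 + 8 * F (t / 2) ^ 6) = r at *
    generalize F (t / 2) = x at *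
    generalize G (t / 2) = y at *
    have hy4 : y ^ 5 = y * (1 - x ^ 6) ^ 2 := by
      rw [show 1 - x ^ 6 = y ^ 2 by linarith]; ring
    rw [div_pow, mul_pow, mul_pow, hy4]
    push_cast
    field_simp
    rw [hsq]
    ring

/-- The velocity vanishes somewhere on `[0, ∞)`: otherwise `F` would increase, so `F ≥ F 1 > 0` on
`[1, ∞)`, and the velocity would decrease at least linearly there. -/
lemma IsLeaf.exists_zero {F G : ℝ → ℝ} (h : IsLeaf F G) (h0 : F 0 = 0) (h1 : G 0 = 1) :
    ∃ t, 0 ≤ t ∧ G t = 0 := by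
  have hFc : Continuous F := continuous_iff_continuousAt.2 fun t => (h.pos t).continuousAt
  have hGc : Continuous G := continuous_iff_continuousAt.2 fun t => (h.vel t).continuousAt
  by_contra! hne
  have hpos : ∀ t, 0 ≤ t → 0 < G t := fun t ht => by
    by_contra! hle
    obtain ⟨x, hx, hx0⟩ := intermediate_value_Icc' ht hGc.continuousOn
      (show (0 : ℝ) ∈ Icc (G t) (G 0) from ⟨hle, by rw [h1]; norm_num⟩)
    exact hne x hx.1 hx0
  have hmono : StrictMonoOn F (Ici 0) :=
    strictMonoOn_of_deriv_pos (convex_Ici 0) hFc.continuousOn fun x hx => by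
      rw [interior_Ici] at hx
      rw [(h.pos x).deriv]
      exact hpos x hx.le
  have ha : 0 < F 1 := by
    rw [← h0]
    exact hmono self_mem_Ici (by norm_num) one_pos
  have hd : ∀ x, HasDerivAt (fun x => G x + 3 * F 1 ^ 5 * x) (-3 * F x ^ 5 + 3 * F 1 ^ 5) x :=
    fun x => ((h.vel x).add ((hasDerivAt_id' x).const_mul (3 * F 1 ^ 5))).congr_deriv (by ring)
  have hanti : AntitoneOn (fun x => G x + 3 * F 1 ^ 5 * x) (Ici 1) :=
    antitoneOn_of_deriv_nonpos (convex_Ici 1) (by fun_prop)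
      (fun x _ => (hd x).differentiableAt.differentiableWithinAt) fun x hx => by
      rw [interior_Ici] at hx
      rw [(hd x).deriv]
      have hx' : (1 : ℝ) < x := hx
      have hle : F 1 ≤ F x :=
        (hmono (show (0 : ℝ) ≤ 1 by norm_num) (show 0 ≤ x by linarith) hx').le
      have := pow_le_pow_left₀ ha.le hle 5
      linarith
  have hc : 0 < 3 * F 1 ^ 5 := by positivity
  have hL : (1 : ℝ) ≤ 1 + 1 / (3 * F 1 ^ 5) := by
    have : 0 < 1 / (3 * F 1 ^ 5) := by positivity
    linarith
  have h2 := hanti self_mem_Ici hL hL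
  have h3 := hpos _ (zero_le_one.trans hL)
  have h4 := (abs_le.1 (h.abs_vel_le 1)).2
  have h5 : 3 * F 1 ^ 5 * (1 / (3 * F 1 ^ 5)) = 1 := by field_simp
  simp only [mul_add, h5] at h2
  linarith

/-- The quarter period is `∫₀¹ dt/√(1 - t⁶)`. -/
lemma IsLeaf.quarter {F G : ℝ → ℝ} (h : IsLeaf F G) (h0 : F 0 = 0) (h1 : G 0 = 1) :
    ∃ T, 0 < T ∧ G T = 0 ∧ (∀ t ∈ Ico 0 T, 0 < G t) ∧
      ∫ t in (0 : ℝ)..1, 1 / √(1 - t ^ 6) = T := by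
  have hFc : Continuous F := continuous_iff_continuousAt.2 fun t => (h.pos t).continuousAt
  have hGc : Continuous G := continuous_iff_continuousAt.2 fun t => (h.vel t).continuousAt
  set Z : Set ℝ := {t | 0 ≤ t ∧ G t = 0} with hZ
  have hZc : IsClosed Z :=
    isClosed_Ici.inter (isClosed_eq hGc continuous_const)
  have hZb : BddBelow Z := ⟨0, fun t ht => ht.1⟩
  have hTZ : sInf Z ∈ Z := hZc.csInf_mem (h.exists_zero h0 h1) hZb
  set T := sInf Z with hT
  have hTpos : 0 < T := hTZ.1.lt_of_ne fun he => by
    have := hTZ.2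
    rw [← he, h1] at this
    exact one_ne_zero this
  have hpos : ∀ t ∈ Ico 0 T, 0 < G t := fun t ht => by
    by_contra! hle
    obtain ⟨x, hx, hx0⟩ := intermediate_value_Icc' ht.1 hGc.continuousOn
      (show (0 : ℝ) ∈ Icc (G t) (G 0) from ⟨hle, by rw [h1]; norm_num⟩)
    exact absurd (csInf_le hZb (show x ∈ Z from ⟨hx.1, hx0⟩)) (not_le.2 (hx.2.trans_lt ht.2))
  have hmono : StrictMonoOn F (Icc 0 T) :=
    strictMonoOn_of_deriv_pos (convex_Icc 0 T) hFc.continuousOn fun x hx => by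
      rw [interior_Icc] at hx
      rw [(h.pos x).deriv]
      exact hpos x ⟨hx.1.le, hx.2⟩
  have hFT : F T = 1 := by
    have hnn : 0 ≤ F T := by
      rw [← h0]
      exact hmono.monotoneOn ⟨le_rfl, hTpos.le⟩ ⟨hTpos.le, le_rfl⟩ hTpos.le
    have he := h.energy T
    rw [hTZ.2] at he
    exact (pow_eq_one_iff_of_nonneg hnn (n := 6) (by norm_num)).1 (by linarith)
  have himg : F '' Icc 0 T = Icc 0 1 := by
    simpa only [h0, hFT] using
      hFc.continuousOn.image_Icc_of_monotoneOn hTpos.le hmono.monotoneOn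
  refine ⟨T, hTpos, hTZ.2, hpos, ?_⟩
  -- This change of variables needs no integrability of the integrand near `t = 1`.
  have hcv := integral_image_eq_integral_abs_deriv_smul measurableSet_Icc
    (fun x _ => (h.pos x).hasDerivWithinAt (s := Icc 0 T)) hmono.injOn
    (fun t => 1 / √(1 - t ^ 6))
  rw [intervalIntegral.integral_of_le zero_le_one, ← integral_Icc_eq_integral_Ioc, ← himg, hcv,
    integral_Icc_eq_integral_Ioo]
  have hone : EqOn (fun x => |G x| • (1 / √(1 - F x ^ 6))) (fun _ => (1 : ℝ)) (Ioo 0 T) :=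
    fun x hx => by
      have hg := hpos x ⟨hx.1.le, hx.2⟩
      have : √(1 - F x ^ 6) = G x := by
        rw [show 1 - F x ^ 6 = G x ^ 2 by linarith [h.energy x], Real.sqrt_sq hg.le]
      simp only [this, abs_of_pos hg, smul_eq_mul]
      field_simp
  rw [setIntegral_congr_fun measurableSet_Ioo hone]
  simp [hTpos.le]

theorem stmt_9 (s : ℝ → ℝ)
    (hs : Differentiable ℝ s) (hs' : Differentiable ℝ (deriv s))
    (hode : ∀ l : ℝ, deriv (deriv s) l = -3 * s l ^ 5)
    (h0 : s 0 = 0) (h1 : deriv s 0 = 1)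
    (π₃ : ℝ) (hπ₃ : π₃ = 2 * ∫ t in (0 : ℝ)..1, 1 / Real.sqrt (1 - t ^ 6)) :
    ∀ (m : ℤ) (l : ℝ), (2 * (m : ℝ) + 1 / 2) * π₃ ≤ l → l ≤ (2 * (m : ℝ) + 3 / 2) * π₃ →
      s (2 * l) = -(2 * s l * Real.sqrt (1 - (s l) ^ 6) / Real.sqrt (1 + 8 * (s l) ^ 6)) := by
  intro m l hl₁ hl₂
  have h : IsLeaf s (deriv s) := .of_energy_at (fun t => (hs t).hasDerivAt)
    (fun t => (hs' t).hasDerivAt.congr_deriv (hode t)) 0 (by simp [h0, h1])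
  obtain ⟨T, hT, hGT, hpos, hint⟩ := h.quarter h0 h1
  rw [hint] at hπ₃
  subst hπ₃
  have heven : ∀ x, deriv s (-x) = deriv s x := fun x => by
    have := congrFun (h.unique (h.reflect 0).neg 0 (by simp [h0]) (by simp)).2 x
    simpa using this.symm
  have hsymm : ∀ x, deriv s x = -deriv s (2 * T - x) := fun x => by
    have hTT : 2 * T - T = T := by ring
    exact congrFun (h.unique (h.reflect (2 * T)) T (by simp [hTT]) (by simp [hTT, hGT])).2 x
  have hanti : Function.Antiperiodic (deriv s) (2 * T) := fun x => by
    rw [hsymm (x + 2 * T), show 2 * T - (x + 2 * T) = -x by ring, heven]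
  have hnn : ∀ x, |x| ≤ T → 0 ≤ deriv s x := fun x hx => by
    have hx' : deriv s x = deriv s |x| := by
      rcases abs_choice x with h' | h' <;> rw [h']
      rw [heven]
    rw [hx']
    rcases hx.lt_or_eq with hlt | heq
    · exact (hpos _ ⟨abs_nonneg x, hlt⟩).le
    · rw [heq, hGT]
  have hneg : deriv s l ≤ 0 := by
    rw [← hanti.periodic_two_mul.sub_int_mul_eq m, hsymm]
    have := hnn (2 * T - (l - m * (2 * (2 * T)))) (abs_le.2 ⟨by linarith, by linarith⟩)
    linarith
  have hvel : deriv s l = -√(1 - s l ^ 6) := by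
    rw [show 1 - s l ^ 6 = (-deriv s l) ^ 2 by linarith [h.energy l],
      Real.sqrt_sq (by linarith), neg_neg]
  have hdup := congrFun (h.unique (h.double h0) 0 (by simp [h0]) (by simp [h0, h1])).1 (2 * l)
  rw [hdup]
  simp only [mul_div_cancel_left₀ l (two_ne_zero' ℝ)]
  rw [hvel]
  ring
end

section
/- For all real l₁, l₂: (s(l₁ + l₂))² = [ (s(l₁)·s'(l₂) + s(l₂)·s'(l₁))² + ((s(l₁))³·s(l₂) − s(l₁)·(s(l₂))³)² ] / ( 1 + 4·(s(l₁))⁴·(s(l₂))² + 4·(s(l₁))²·(s(l₂))⁴ ) (addition formula for sleaf₃). -/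
/-!
The energy integral gives `s'² = 1 - s⁶`. Fix `c = l₁ + l₂` and consider the right-hand side at
`(t, c - t)` as a function of `t`. Its derivative is a rational function of `s` and `s'` at `t` and
`c - t`, with positive denominator, whose numerator vanishes modulo the two energy relations
(`addition_numerator_eq_zero`). So the right-hand side depends only on `c`, and at `t = c` it equals
`s(c)²` because `s 0 = 0` and `s' 0 = 1`.
-/

/-- Conservation of energy for `s'' = -3 s⁵` with `s 0 = 0`, `s' 0 = 1`. -/
lemma deriv_sq_eq_one_sub_pow_six (s : ℝ → ℝ)
    (hs : Differentiable ℝ s) (hs' : Differentiable ℝ (deriv s))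
    (hode : ∀ l : ℝ, deriv (deriv s) l = -3 * s l ^ 5)
    (h0 : s 0 = 0) (h1 : deriv s 0 = 1) (l : ℝ) :
    deriv s l ^ 2 = 1 - s l ^ 6 := by
  have hd : ∀ t, HasDerivAt (fun t => deriv s t ^ 2 + s t ^ 6) 0 t := by
    intro t
    have h := ((hs' t).hasDerivAt.pow 2).add ((hs t).hasDerivAt.pow 6)
    refine h.congr_deriv ?_
    rw [hode]
    push_cast
    ring
  have h := is_const_of_deriv_eq_zero (fun t => (hd t).differentiableAt)
    (fun t => (hd t).deriv) l 0
  simp only [h0, h1] at h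
  linarith

/-- With `x, p = s(t), s'(t)` and `y, q = s(c - t), s'(c - t)`, the left side is the numerator
`N' D - N D'` in the derivative of the quotient `N / D` along `t`. -/
lemma addition_numerator_eq_zero (x y p q : ℝ) (hp : p ^ 2 = 1 - x ^ 6) (hq : q ^ 2 = 1 - y ^ 6) :
    (2 * (x * q + y * p) * (3 * x * y * (y ^ 4 - x ^ 4))
        + 2 * (x ^ 3 * y - x * y ^ 3) * (p * (3 * x ^ 2 * y - y ^ 3) - q * (x ^ 3 - 3 * x * y ^ 2)))
          * (1 + 4 * x ^ 4 * y ^ 2 + 4 * x ^ 2 * y ^ 4)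
      - ((x * q + y * p) ^ 2 + (x ^ 3 * y - x * y ^ 3) ^ 2)
          * (p * (16 * x ^ 3 * y ^ 2 + 8 * x * y ^ 4) - q * (8 * x ^ 4 * y + 16 * x ^ 2 * y ^ 3))
      = 0 := by
  linear_combination
    (-(y ^ 2 * (p * (16 * x ^ 3 * y ^ 2 + 8 * x * y ^ 4) - q * (8 * x ^ 4 * y + 16 * x ^ 2 * y ^ 3))
        + 2 * x * y * q * (16 * x ^ 3 * y ^ 2 + 8 * x * y ^ 4))) * hp
    + (-(x ^ 2 * (p * (16 * x ^ 3 * y ^ 2 + 8 * x * y ^ 4) - q * (8 * x ^ 4 * y + 16 * x ^ 2 * y ^ 3))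
        - 2 * x * y * p * (8 * x ^ 4 * y + 16 * x ^ 2 * y ^ 3))) * hq

theorem stmt_10 (s : ℝ → ℝ)
    (hs : Differentiable ℝ s) (hs' : Differentiable ℝ (deriv s))
    (hode : ∀ l : ℝ, deriv (deriv s) l = -3 * s l ^ 5)
    (h0 : s 0 = 0) (h1 : deriv s 0 = 1) :
    ∀ l₁ l₂ : ℝ,
      (s (l₁ + l₂)) ^ 2 =
        ((s l₁ * deriv s l₂ + s l₂ * deriv s l₁) ^ 2
            + ((s l₁) ^ 3 * s l₂ - s l₁ * (s l₂) ^ 3) ^ 2) /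
          (1 + 4 * (s l₁) ^ 4 * (s l₂) ^ 2 + 4 * (s l₁) ^ 2 * (s l₂) ^ 4) := by
  intro l₁ l₂
  have hE := deriv_sq_eq_one_sub_pow_six s hs hs' hode h0 h1
  obtain ⟨c, hc⟩ : ∃ c, c = l₁ + l₂ := ⟨_, rfl⟩
  have hd : ∀ t, HasDerivAt (fun t =>
      ((s t * deriv s (c - t) + s (c - t) * deriv s t) ^ 2
            + ((s t) ^ 3 * s (c - t) - s t * (s (c - t)) ^ 3) ^ 2) /
          (1 + 4 * (s t) ^ 4 * (s (c - t)) ^ 2 + 4 * (s t) ^ 2 * (s (c - t)) ^ 4)) 0 t := by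
    intro t
    have hx : HasDerivAt s (deriv s t) t := (hs t).hasDerivAt
    have hp : HasDerivAt (deriv s) (-3 * s t ^ 5) t := hode t ▸ (hs' t).hasDerivAt
    have hsub : HasDerivAt (fun t => c - t) (-1) t := (hasDerivAt_id t).const_sub c
    have hy : HasDerivAt (fun t => s (c - t)) (deriv s (c - t) * -1) t :=
      (hs (c - t)).hasDerivAt.comp t hsub
    have hq : HasDerivAt (fun t => deriv s (c - t)) (-3 * s (c - t) ^ 5 * -1) t := by
      rw [← hode]
      exact (hs' (c - t)).hasDerivAt.comp t hsub
    have hN := (((hx.mul hq).add (hy.mul hp)).pow 2).add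
      ((((hx.pow 3).mul hy).sub (hx.mul (hy.pow 3))).pow 2)
    have hD := ((((hx.pow 4).const_mul 4).mul (hy.pow 2)).const_add 1).add
      (((hx.pow 2).const_mul 4).mul (hy.pow 4))
    have hpos : 1 + 4 * (s t) ^ 4 * (s (c - t)) ^ 2 + 4 * (s t) ^ 2 * (s (c - t)) ^ 4 ≠ 0 := by
      positivity
    refine (hN.div hD hpos).congr_deriv ?_
    refine div_eq_zero_iff.mpr (Or.inl ?_)
    rw [← addition_numerator_eq_zero _ _ _ _ (hE t) (hE (c - t))]
    simp only [Pi.add_apply, Pi.mul_apply, Pi.sub_apply, Pi.pow_apply]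
    push_cast
    ring
  have h := is_const_of_deriv_eq_zero (fun t => (hd t).differentiableAt)
    (fun t => (hd t).deriv) l₁ c
  have hl : c - l₁ = l₂ := by rw [hc]; ring
  simp only [hl, sub_self, h0, h1] at h
  rw [← hc, h]
  simp
end

section
/- For all real l: (s(l))² + (c(l))² + 2·(s(l))²·(c(l))² = 1. -/
/-!
Both squares `x = s²` and `y = c²` solve the same equation `f'' = 2 - 8 f³`, because each leaf
function conserves the energy `f'² + f⁶ = 1` (`leaf_energy`). The Möbius map
`x ↦ z = (1 - x) / (1 + 2 x)` preserves this equation and turns the initial data of `s²`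
into those of `c²`. The difference `w = z - y` then satisfies the linear equation
`w'' = -8 (z² + z y + y²) w` with bounded coefficient and zero initial data, so `w = 0` by a
Grönwall argument (`linear_ode_zero`). Clearing denominators in `c² = (1 - s²) / (1 + 2 s²)`
is the claimed identity.
-/

/-- First integral of the leaf equation, with the initial energy normalised to `1`. -/
lemma leaf_energy_s13 (f : ℝ → ℝ) (hf : Differentiable ℝ f) (hf' : Differentiable ℝ (deriv f))
    (hode : ∀ l : ℝ, deriv (deriv f) l = -3 * f l ^ 5)
    (h0 : deriv f 0 ^ 2 + f 0 ^ 6 = 1) (l : ℝ) : deriv f l ^ 2 + f l ^ 6 = 1 := by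
  have hd : ∀ t, HasDerivAt (fun t => deriv f t ^ 2 + f t ^ 6) 0 t := by
    intro t
    have h1 := (hf' t).hasDerivAt
    rw [hode t] at h1
    refine ((h1.pow 2).add ((hf t).hasDerivAt.pow 6)).congr_deriv ?_
    push_cast
    ring
  rw [← h0]
  exact is_const_of_deriv_eq_zero (fun t => (hd t).differentiableAt) (fun t => (hd t).deriv) l 0

lemma leaf_sq_le_one {a b : ℝ} (h : b ^ 2 + a ^ 6 = 1) : a ^ 2 ≤ 1 := by
  have h1 : (a ^ 2) ^ 3 ≤ 1 := by nlinarith [sq_nonneg b]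
  exact (pow_le_one_iff_of_nonneg (sq_nonneg a) (by norm_num)).1 h1

lemma leaf_sq_hasDerivAt (f : ℝ → ℝ) (hf : Differentiable ℝ f) (l : ℝ) :
    HasDerivAt (fun t => f t ^ 2) (2 * f l * deriv f l) l := by
  refine ((hf l).hasDerivAt.pow 2).congr_deriv ?_
  push_cast
  ring

/-- The square of a leaf function solves `x'' = 2 - 8 x³`. -/
lemma leaf_sq_hasDerivAt_deriv (f : ℝ → ℝ) (hf : Differentiable ℝ f)
    (hf' : Differentiable ℝ (deriv f)) (hode : ∀ l : ℝ, deriv (deriv f) l = -3 * f l ^ 5)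
    (h0 : deriv f 0 ^ 2 + f 0 ^ 6 = 1) (l : ℝ) :
    HasDerivAt (fun t => 2 * f t * deriv f t) (2 - 8 * (f l ^ 2) ^ 3) l := by
  have h1 := (hf' l).hasDerivAt
  rw [hode l] at h1
  refine (((hf l).hasDerivAt.const_mul 2).mul h1).congr_deriv ?_
  linear_combination 2 * leaf_energy_s13 f hf hf' hode h0 l

/-- Uniqueness for `w'' = -q w` with `q` bounded: the energy `w² + w'²` grows at most
exponentially in either time direction. -/
lemma linear_ode_zero (w w₁ q : ℝ → ℝ) (K : ℝ) (hw : ∀ t, HasDerivAt w (w₁ t) t)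
    (hw₁ : ∀ t, HasDerivAt w₁ (-q t * w t) t) (hq : ∀ t, |1 - q t| ≤ K)
    (h0 : w 0 = 0) (h1 : w₁ 0 = 0) (l : ℝ) : w l = 0 := by
  have hE : ∀ t, HasDerivAt (fun t => w t ^ 2 + w₁ t ^ 2) (2 * (1 - q t) * (w t * w₁ t)) t := by
    intro t
    refine (((hw t).pow 2).add ((hw₁ t).pow 2)).congr_deriv ?_
    push_cast
    ring
  have hb : ∀ t, |2 * (1 - q t) * (w t * w₁ t)| ≤ K * (w t ^ 2 + w₁ t ^ 2) := by
    intro t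
    have h2 : 2 * |w t * w₁ t| ≤ w t ^ 2 + w₁ t ^ 2 := by
      rw [abs_mul]
      nlinarith [sq_nonneg (|w t| - |w₁ t|), sq_abs (w t), sq_abs (w₁ t)]
    calc |2 * (1 - q t) * (w t * w₁ t)| = |1 - q t| * (2 * |w t * w₁ t|) := by
          rw [abs_mul, abs_mul, abs_two]
          ring
      _ ≤ K * (w t ^ 2 + w₁ t ^ 2) :=
          mul_le_mul (hq t) h2 (by positivity) ((abs_nonneg _).trans (hq t))
  have hexp : ∀ a t : ℝ, HasDerivAt (fun t => (w t ^ 2 + w₁ t ^ 2) * Real.exp (a * t))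
      ((2 * (1 - q t) * (w t * w₁ t) + a * (w t ^ 2 + w₁ t ^ 2)) * Real.exp (a * t)) t := by
    intro a t
    refine ((hE t).mul ((hasDerivAt_id t).const_mul a).exp).congr_deriv ?_
    simp only [id]
    ring
  have key : ∃ a : ℝ, (w l ^ 2 + w₁ l ^ 2) * Real.exp (a * l) ≤ 0 := by
    rcases le_total 0 l with hl | hl
    · refine ⟨-K, ?_⟩
      have hanti : Antitone (fun t => (w t ^ 2 + w₁ t ^ 2) * Real.exp (-K * t)) :=
        antitone_of_hasDerivAt_nonpos (hexp (-K)) fun t =>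
          mul_nonpos_of_nonpos_of_nonneg (by linarith [(abs_le.1 (hb t)).2]) (Real.exp_pos _).le
      simpa [h0, h1] using hanti hl
    · refine ⟨K, ?_⟩
      have hmono : Monotone (fun t => (w t ^ 2 + w₁ t ^ 2) * Real.exp (K * t)) :=
        monotone_of_hasDerivAt_nonneg (hexp K) fun t =>
          mul_nonneg (by linarith [(abs_le.1 (hb t)).1]) (Real.exp_pos _).le
      simpa [h0, h1] using hmono hl
  obtain ⟨a, ha⟩ := key
  have h2 : w l ^ 2 + w₁ l ^ 2 ≤ 0 := nonpos_of_mul_nonpos_left ha (Real.exp_pos _)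
  exact pow_eq_zero_iff (two_ne_zero) |>.1 (by nlinarith [sq_nonneg (w l), sq_nonneg (w₁ l)])

theorem stmt_13 (s c : ℝ → ℝ)
    (hs : Differentiable ℝ s) (hs' : Differentiable ℝ (deriv s))
    (hsode : ∀ l : ℝ, deriv (deriv s) l = -3 * s l ^ 5)
    (hs0 : s 0 = 0) (hs1 : deriv s 0 = 1)
    (hc : Differentiable ℝ c) (hc' : Differentiable ℝ (deriv c))
    (hcode : ∀ l : ℝ, deriv (deriv c) l = -3 * c l ^ 5)
    (hc0 : c 0 = 1) (hc1 : deriv c 0 = 0) :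
    ∀ l : ℝ, (s l) ^ 2 + (c l) ^ 2 + 2 * (s l) ^ 2 * (c l) ^ 2 = 1 := by
  intro l
  have es0 : deriv s 0 ^ 2 + s 0 ^ 6 = 1 := by rw [hs0, hs1]; norm_num
  have ec0 : deriv c 0 ^ 2 + c 0 ^ 6 = 1 := by rw [hc0, hc1]; norm_num
  have hes := leaf_energy_s13 s hs hs' hsode es0
  have hec := leaf_energy_s13 c hc hc' hcode ec0
  have hpos : ∀ t, 0 < 1 + 2 * s t ^ 2 := fun t => by positivity
  have hx := leaf_sq_hasDerivAt s hs
  have hx' := leaf_sq_hasDerivAt_deriv s hs hs' hsode es0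
  have hy := leaf_sq_hasDerivAt c hc
  have hy' := leaf_sq_hasDerivAt_deriv c hc hc' hcode ec0
  have hden : ∀ t, HasDerivAt (fun t => 1 + 2 * s t ^ 2) (2 * (2 * s t * deriv s t)) t :=
    fun t => ((hx t).const_mul 2).const_add 1
  have hz : ∀ t, HasDerivAt (fun t => (1 - s t ^ 2) / (1 + 2 * s t ^ 2))
      (-3 * (2 * s t * deriv s t) / (1 + 2 * s t ^ 2) ^ 2) t := by
    intro t
    refine (((hx t).const_sub 1).div (hden t) (hpos t).ne').congr_deriv ?_
    congr 1
    ring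
  have hz' : ∀ t, HasDerivAt (fun t => -3 * (2 * s t * deriv s t) / (1 + 2 * s t ^ 2) ^ 2)
      (2 - 8 * ((1 - s t ^ 2) / (1 + 2 * s t ^ 2)) ^ 3) t := by
    intro t
    refine (((hx' t).const_mul (-3)).div ((hden t).pow 2)
      (pow_ne_zero 2 (hpos t).ne')).congr_deriv ?_
    have hp := (hpos t).ne'
    have he : deriv s t ^ 2 = 1 - s t ^ 6 := by linarith [hes t]
    simp only [Pi.pow_apply]
    push_cast
    field_simp
    ring_nf
    simp only [he]
    ring
  -- Since `0 ≤ y, z ≤ 1`, the coefficient `q = 8 (z² + z y + y²)` lies in `[0, 24]`, so `|1 - q| ≤ 25`.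
  have hw := linear_ode_zero (fun t => (1 - s t ^ 2) / (1 + 2 * s t ^ 2) - c t ^ 2)
    (fun t => -3 * (2 * s t * deriv s t) / (1 + 2 * s t ^ 2) ^ 2 - 2 * c t * deriv c t)
    (fun t => 8 * (((1 - s t ^ 2) / (1 + 2 * s t ^ 2)) ^ 2
      + (1 - s t ^ 2) / (1 + 2 * s t ^ 2) * c t ^ 2 + (c t ^ 2) ^ 2)) 25
    (fun t => (hz t).sub (hy t))
    (fun t => ((hz' t).sub (hy' t)).congr_deriv (by ring))
    (fun t => by
      have hx1 := leaf_sq_le_one (hes t)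
      have hy1 := leaf_sq_le_one (hec t)
      have hy0 := sq_nonneg (c t)
      have hz0 : 0 ≤ (1 - s t ^ 2) / (1 + 2 * s t ^ 2) :=
        div_nonneg (by linarith) (hpos t).le
      have hz1 : (1 - s t ^ 2) / (1 + 2 * s t ^ 2) ≤ 1 := by
        rw [div_le_one (hpos t)]
        nlinarith [sq_nonneg (s t)]
      generalize (1 - s t ^ 2) / (1 + 2 * s t ^ 2) = z at *
      generalize c t ^ 2 = y at *
      rw [abs_le]
      have h1 := mul_nonneg hz0 hy0
      constructor <;> nlinarith [mul_le_one₀ hz1 hy0 hy1])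
    (by simp [hs0, hc0]) (by simp [hs0, hc1]) l
  have h2 := sub_eq_zero.1 hw
  rw [div_eq_iff (hpos l).ne'] at h2
  linear_combination -h2
end

section
/- For all real l: c(2l) = ( 2·(c(l))² + 2·(c(l))⁴ − 1 ) / √( 1 + 8·(c(l))² + 8·(c(l))⁶ − 8·(c(l))⁸ ) (double-angle formula for cleaf₃). -/
/-!
Write `D = 1 + 8c² + 8c⁶ - 8c⁸`. Conservation of energy gives `c'² + c⁶ = 1`, so `c² ≤ 1` and `D ≥ 1`;
hence the right-hand side `g = (2c² + 2c⁴ - 1) / √D` is smooth, with `g' = 12 c c' P(c) / √D³` for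
`P(x) = 1 + 2x² + 6x⁴ - 4x⁶ + 4x⁸`. Differentiating once more and eliminating `c'²` by the energy
identity gives `g'' = -12 g⁵`, which is also the equation satisfied by `l ↦ c (2 * l)`. Both
functions have value `1` and derivative `0` at `0`, and both stay in `[-1, 1]`
(`D - (2c² + 2c⁴ - 1)² = 12 c² (1 - c⁶) ≥ 0`), where the vector field `(x, y) ↦ (y, -12 x⁵)` is Lipschitz,
so they coincide by uniqueness of solutions.
-/

theorem leaf_energy_s14 (c : ℝ → ℝ)
    (hc : Differentiable ℝ c) (hc' : Differentiable ℝ (deriv c))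
    (hcode : ∀ l : ℝ, deriv (deriv c) l = -3 * c l ^ 5)
    (hc0 : c 0 = 1) (hc1 : deriv c 0 = 0) (l : ℝ) :
    deriv c l ^ 2 = 1 - c l ^ 6 := by
  have hd : ∀ x, HasDerivAt (fun x => deriv c x ^ 2 + c x ^ 6) 0 x := by
    intro x
    have h1 := (hc' x).hasDerivAt
    rw [hcode x] at h1
    refine ((h1.pow 2).add ((hc x).hasDerivAt.pow 6)).congr_deriv ?_
    push_cast
    ring
  have h := is_const_of_deriv_eq_zero (fun x => (hd x).differentiableAt)
    (fun x => (hd x).deriv) l 0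
  simp only [hc0, hc1] at h
  linarith

theorem sq_le_one_of_energy {x y : ℝ} (h : y ^ 2 = 1 - x ^ 6) : x ^ 2 ≤ 1 := by
  have h6 : (x ^ 2) ^ 3 ≤ 1 := by nlinarith [sq_nonneg y]
  exact (pow_le_one_iff_of_nonneg (sq_nonneg x) (by norm_num)).1 h6

/-- The vector field of `x'' = -12 x⁵` is Lipschitz on the strip `|x| ≤ 1`; no bound on the
velocity `y` is needed because the field is linear in `y`. -/
theorem field_lipschitz :
    LipschitzOnWith 60 (fun p : ℝ × ℝ => (p.2, -12 * p.1 ^ 5)) {p : ℝ × ℝ | p.1 ^ 2 ≤ 1} := by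
  refine LipschitzOnWith.of_dist_le_mul ?_
  rintro ⟨x, y⟩ hx ⟨u, v⟩ hu
  simp only [Set.mem_ofPred_eq, sq_le_one_iff_abs_le_one] at hx hu
  have hm1 : |x - u| ≤ max |x - u| |y - v| := le_max_left _ _
  have hm2 : |y - v| ≤ max |x - u| |y - v| := le_max_right _ _
  simp only [Prod.dist_eq, Real.dist_eq]
  have h60 : ((60 : NNReal) : ℝ) = 60 := rfl
  rw [h60]
  refine max_le (by linarith [abs_nonneg (y - v)]) ?_
  have e : -12 * x ^ 5 - -12 * u ^ 5
      = -12 * (x ^ 4 + x ^ 3 * u + x ^ 2 * u ^ 2 + x * u ^ 3 + u ^ 4) * (x - u) := by ring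
  have hb : ∀ i j : ℕ, |x ^ i * u ^ j| ≤ 1 := by
    intro i j
    rw [abs_mul, abs_pow, abs_pow]
    exact mul_le_one₀ (pow_le_one₀ (abs_nonneg _) hx) (by positivity)
      (pow_le_one₀ (abs_nonneg _) hu)
  have hs : |-12 * (x ^ 4 + x ^ 3 * u + x ^ 2 * u ^ 2 + x * u ^ 3 + u ^ 4)| ≤ 60 := by
    have h0 := abs_le.1 (hb 4 0)
    have h1 := abs_le.1 (hb 3 1)
    have h2 := abs_le.1 (hb 2 2)
    have h3 := abs_le.1 (hb 1 3)
    have h4 := abs_le.1 (hb 0 4)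
    simp only [pow_zero, pow_one, mul_one, one_mul] at h0 h1 h2 h3 h4
    rw [abs_le]
    constructor <;> linarith
  rw [e, abs_mul]
  exact mul_le_mul hs hm1 (abs_nonneg _) (by norm_num)

theorem stmt_14 (c : ℝ → ℝ)
    (hc : Differentiable ℝ c) (hc' : Differentiable ℝ (deriv c))
    (hcode : ∀ l : ℝ, deriv (deriv c) l = -3 * c l ^ 5)
    (hc0 : c 0 = 1) (hc1 : deriv c 0 = 0) :
    ∀ l : ℝ, c (2 * l) =
      (2 * (c l) ^ 2 + 2 * (c l) ^ 4 - 1) /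
        Real.sqrt (1 + 8 * (c l) ^ 2 + 8 * (c l) ^ 6 - 8 * (c l) ^ 8) := by
  have hE := leaf_energy_s14 c hc hc' hcode hc0 hc1
  have hle : ∀ l, c l ^ 2 ≤ 1 := fun l => sq_le_one_of_energy (hE l)
  have h1 : ∀ l, HasDerivAt c (deriv c l) l := fun l => (hc l).hasDerivAt
  have h2 : ∀ l, HasDerivAt (deriv c) (-3 * c l ^ 5) l := fun l => by
    rw [← hcode l]; exact (hc' l).hasDerivAt
  set D : ℝ → ℝ := fun l => 1 + 8 * (c l) ^ 2 + 8 * (c l) ^ 6 - 8 * (c l) ^ 8 with hD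
  have hDpos : ∀ l, 0 < D l := by
    intro l
    have : c l ^ 8 ≤ c l ^ 6 := by
      have := mul_le_mul_of_nonneg_left (hle l) (show 0 ≤ c l ^ 6 by positivity)
      nlinarith
    have := sq_nonneg (c l)
    simp only [hD]
    linarith
  set r : ℝ → ℝ := fun l => Real.sqrt (D l) with hr
  have hrpos : ∀ l, 0 < r l := fun l => Real.sqrt_pos.2 (hDpos l)
  have hr2 : ∀ l, r l ^ 2 = 1 + 8 * (c l) ^ 2 + 8 * (c l) ^ 6 - 8 * (c l) ^ 8 :=
    fun l => Real.sq_sqrt (hDpos l).le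
  have hrd : ∀ l, HasDerivAt r
      ((8 * c l + 24 * c l ^ 5 - 32 * c l ^ 7) * deriv c l / r l) l := by
    intro l
    have hDd : HasDerivAt D ((16 * c l + 48 * c l ^ 5 - 64 * c l ^ 7) * deriv c l) l := by
      refine (((((h1 l).pow 2).const_mul 8).const_add 1).add (((h1 l).pow 6).const_mul 8)
        |>.sub (((h1 l).pow 8).const_mul 8)).congr_deriv ?_
      push_cast
      ring
    refine (hDd.sqrt (hDpos l).ne').congr_deriv ?_
    change _ / (2 * r l) = _
    have := (hrpos l).ne'
    field_simp
    ring
  set g : ℝ → ℝ := fun l => (2 * (c l) ^ 2 + 2 * (c l) ^ 4 - 1) / r l with hg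
  set k : ℝ → ℝ := fun l => deriv c l *
    (12 * (c l + 2 * c l ^ 3 + 6 * c l ^ 5 - 4 * c l ^ 7 + 4 * c l ^ 9)) / r l ^ 3 with hk
  have hgd : ∀ l, HasDerivAt g (k l) l := by
    intro l
    have hN : HasDerivAt (fun l => 2 * (c l) ^ 2 + 2 * (c l) ^ 4 - 1)
        ((4 * c l + 8 * c l ^ 3) * deriv c l) l := by
      refine ((((h1 l).pow 2).const_mul 2).add (((h1 l).pow 4).const_mul 2)
        |>.sub_const 1).congr_deriv ?_
      push_cast
      ring
    refine (hN.div (hrd l) (hrpos l).ne').congr_deriv ?_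
    have := (hrpos l).ne'
    simp only [hk]
    field_simp
    rw [hr2 l]
    ring
  have hkd : ∀ l, HasDerivAt k (-12 * g l ^ 5) l := by
    intro l
    have hP : HasDerivAt
        (fun l => 12 * (c l + 2 * c l ^ 3 + 6 * c l ^ 5 - 4 * c l ^ 7 + 4 * c l ^ 9))
        (12 * (1 + 6 * c l ^ 2 + 30 * c l ^ 4 - 28 * c l ^ 6 + 36 * c l ^ 8) * deriv c l) l := by
      refine (((((h1 l).add (((h1 l).pow 3).const_mul 2)).add (((h1 l).pow 5).const_mul 6)).sub
        (((h1 l).pow 7).const_mul 4)).add (((h1 l).pow 9).const_mul 4)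
        |>.const_mul 12).congr_deriv ?_
      push_cast
      ring
    refine (((h2 l).mul hP).div ((hrd l).pow 3) (pow_ne_zero 3 (hrpos l).ne')).congr_deriv ?_
    have hne := (hrpos l).ne'
    have hs := hE l
    have hR := hr2 l
    simp only [hg, Pi.mul_apply, Pi.pow_apply]
    generalize deriv c l = s at *
    generalize r l = R at *
    generalize c l = x at *
    -- Clearing `R` leaves a polynomial identity in `x` once `R²` and `s²` are eliminated.
    have key : (-36 * x ^ 5 * (x + 2 * x ^ 3 + 6 * x ^ 5 - 4 * x ^ 7 + 4 * x ^ 9)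
        + 12 * s ^ 2 * (1 + 6 * x ^ 2 + 30 * x ^ 4 - 28 * x ^ 6 + 36 * x ^ 8)) * R ^ 2
        - 36 * s ^ 2 * (x + 2 * x ^ 3 + 6 * x ^ 5 - 4 * x ^ 7 + 4 * x ^ 9)
          * (8 * x + 24 * x ^ 5 - 32 * x ^ 7)
        = -12 * (2 * x ^ 2 + 2 * x ^ 4 - 1) ^ 5 := by
      rw [hR, hs]
      ring
    rw [div_pow, ← mul_div_assoc (-12 : ℝ), ← key]
    field_simp
    push_cast
    ring
  have hgle : ∀ l, g l ^ 2 ≤ 1 := by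
    intro l
    simp only [hg]
    rw [div_pow, div_le_one (pow_pos (hrpos l) 2), hr2 l]
    have : 0 ≤ c l ^ 2 * (deriv c l) ^ 2 := by positivity
    rw [hE l] at this
    nlinarith
  have hF : ∀ t, HasDerivAt (fun l => (c (2 * l), 2 * deriv c (2 * l)))
      (2 * deriv c (2 * t), -12 * c (2 * t) ^ 5) t := by
    intro t
    have hm : HasDerivAt (fun l : ℝ => 2 * l) 2 t := by
      simpa using (hasDerivAt_id t).const_mul 2
    refine HasDerivAt.prodMk (((h1 (2 * t)).comp t hm).congr_deriv (by ring)) ?_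
    exact (((h2 (2 * t)).comp t hm).const_mul 2).congr_deriv (by ring)
  have hr0 : r 0 = 3 := by
    have := hr2 0
    rw [hc0] at this
    nlinarith [hrpos 0]
  have huniq := ODE_solution_unique_univ (t₀ := 0)
    (v := fun _ p => (p.2, -12 * p.1 ^ 5)) (s := fun _ => {p : ℝ × ℝ | p.1 ^ 2 ≤ 1})
    (K := 60) (f := fun l => (c (2 * l), 2 * deriv c (2 * l))) (g := fun l => (g l, k l))
    (fun _ => field_lipschitz) (fun t => ⟨hF t, hle (2 * t)⟩)
    (fun t => ⟨(hgd t).prodMk (hkd t), hgle t⟩)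
    (by simp only [hg, hk, mul_zero, hc0, hc1, hr0]; norm_num)
  intro l
  exact congrArg Prod.fst (congrFun huniq l)
end

section
/- Let m, k be integers. If either (2k+1)·π₃ ≤ l₁ ≤ (2k+2)·π₃ and (4m−1)·π₃/2 ≤ l₂ ≤ (4m+1)·π₃/2, or 2k·π₃ ≤ l₁ ≤ (2k+1)·π₃ and (4m+1)·π₃/2 ≤ l₂ ≤ (4m+3)·π₃/2, then (c(l₁ + l₂))² = [ (c(l₁)·√(1 − (s(l₂))⁶) + s(l₂)·√(1 − (c(l₁))⁶))² + ((c(l₁))³·s(l₂) − c(l₁)·(s(l₂))³)² ] / ( 1 + 4·(s(l₂))⁴·(c(l₁))² + 4·(s(l₂))²·(c(l₁))⁴ ). -/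
/-!
The addition formula holds for all real arguments once the square roots are replaced by derivatives.
Solutions with the given initial data satisfy the energy laws `s'² = 1 - s⁶` and `c'² = 1 - c⁶`, and
modulo these the function
`t ↦ ((c s' + s c')² + (c³ s - c s³)²) / (1 + 4 s⁴ c² + 4 s² c⁴)`, with `c` taken at `t` and `s`
at `L - t`, has derivative zero; its value at `t = L` is `c(L)²` (`addition_formula`).

Since `√(1 - s⁶) = |s'|` and `√(1 - c⁶) = |c'|`, the only remaining point is that
`s'(l₂) c'(l₁) ≥ 0` on the stated rectangles. Let `T` be the first positive zero of `s'`. The substitution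
`t = s(x)` on `(0, T)` shows `π₃ = 2T`. Uniqueness for the differential equation
(the nonlinearity is Lipschitz on `|y| ≤ 1`, which the energy law guarantees) yields
`s(-x) = -s(x)`, `s(2T - x) = s(x)` and `c(x) = s(x + T)`. Hence `s'` is nonnegative on `[-T, T]`,
changes sign under translation by `2T`, and `c'` is its translate by `T`.
-/

namespace LeafAux

/-- `y` solves `y'' = -3 y⁵` on the line with derivative `z` and energy `z² + y⁶ = 1`. The energy
law is a field so that it passes directly to negatives, translates and reflections. -/
structure Sol (y z : ℝ → ℝ) : Prop where
  d1 : ∀ x, HasDerivAt y (z x) x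
  d2 : ∀ x, HasDerivAt z (-3 * y x ^ 5) x
  en : ∀ x, z x ^ 2 + y x ^ 6 = 1

lemma sol_of_ode {y : ℝ → ℝ} (h : Differentiable ℝ y) (h' : Differentiable ℝ (deriv y))
    (ho : ∀ l : ℝ, deriv (deriv y) l = -3 * y l ^ 5)
    (h0 : deriv y 0 ^ 2 + y 0 ^ 6 = 1) : Sol y (deriv y) := by
  have d1 : ∀ x, HasDerivAt y (deriv y x) x := fun x => (h x).hasDerivAt
  have d2 : ∀ x, HasDerivAt (deriv y) (-3 * y x ^ 5) x := fun x => ho x ▸ (h' x).hasDerivAt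
  refine ⟨d1, d2, fun x => ?_⟩
  have hd : ∀ x, HasDerivAt (fun x => deriv y x ^ 2 + y x ^ 6) 0 x := fun x => by
    refine (((d2 x).pow 2).add ((d1 x).pow 6)).congr_deriv ?_
    push_cast
    ring
  have := is_const_of_deriv_eq_zero (fun x => (hd x).differentiableAt) (fun x => (hd x).deriv) x 0
  simpa only [h0] using this

lemma Sol.abs_le {y z : ℝ → ℝ} (h : Sol y z) (x : ℝ) : |y x| ≤ 1 := by
  have h6 : |y x| ^ 6 ≤ 1 := by
    have : |y x| ^ 6 = y x ^ 6 := (by decide : Even 6).pow_abs _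
    nlinarith [h.en x, sq_nonneg (z x)]
  exact (pow_le_one_iff_of_nonneg (abs_nonneg _) (by norm_num)).1 h6

/-- The first-order field of `y'' = -3 y⁵` on the strip containing all solutions of energy `1`:
`|a⁵ - b⁵| ≤ 5 |a - b|` for `|a|, |b| ≤ 1`. -/
lemma lipschitz_field : LipschitzOnWith 15 (fun p : ℝ × ℝ => ((p.2, -3 * p.1 ^ 5) : ℝ × ℝ))
    {p | |p.1| ≤ 1} := by
  refine LipschitzOnWith.of_dist_le_mul fun p hp q hq => ?_
  simp only [Set.mem_ofPred_eq] at hp hq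
  rw [Prod.dist_eq, Prod.dist_eq, Real.dist_eq, Real.dist_eq, Real.dist_eq]
  simp only [NNReal.coe_ofNat]
  have h1 := le_max_left |p.1 - q.1| |p.2 - q.2|
  have h2 := le_max_right |p.1 - q.1| |p.2 - q.2|
  refine max_le ?_ ?_
  · linarith [abs_nonneg (p.2 - q.2)]
  · have hm : ∀ i j : ℕ, |p.1 ^ i * q.1 ^ j| ≤ 1 := fun i j => by
      rw [abs_mul, abs_pow, abs_pow]
      exact mul_le_one₀ (pow_le_one₀ (abs_nonneg _) hp) (by positivity)
        (pow_le_one₀ (abs_nonneg _) hq)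
    have h5 : |p.1 ^ 4 * q.1 ^ 0 + p.1 ^ 3 * q.1 ^ 1 + p.1 ^ 2 * q.1 ^ 2 + p.1 ^ 1 * q.1 ^ 3
        + p.1 ^ 0 * q.1 ^ 4| ≤ 5 := by
      have a := fun i j => abs_le.1 (hm i j)
      rw [_root_.abs_le]
      constructor <;> linarith [a 4 0, a 3 1, a 2 2, a 1 3, a 0 4, (a 4 0).1, (a 3 1).1, (a 2 2).1,
        (a 1 3).1, (a 0 4).1, (a 4 0).2, (a 3 1).2, (a 2 2).2, (a 1 3).2, (a 0 4).2]
    have e : -3 * p.1 ^ 5 - -3 * q.1 ^ 5 = -3 * ((p.1 ^ 4 * q.1 ^ 0 + p.1 ^ 3 * q.1 ^ 1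
        + p.1 ^ 2 * q.1 ^ 2 + p.1 ^ 1 * q.1 ^ 3 + p.1 ^ 0 * q.1 ^ 4) * (p.1 - q.1)) := by ring
    rw [e, abs_mul, abs_mul]
    have := mul_le_mul_of_nonneg_right h5 (abs_nonneg (p.1 - q.1))
    norm_num at this ⊢
    linarith

lemma Sol.unique {y z y' z' : ℝ → ℝ} (h : Sol y z) (h' : Sol y' z') (t : ℝ)
    (hy : y t = y' t) (hz : z t = z' t) : y = y' ∧ z = z' := by
  have key : (fun x => (y x, z x)) = fun x => (y' x, z' x) :=
    ODE_solution_unique_univ (t₀ := t)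
      (v := fun _ p => ((p.2, -3 * p.1 ^ 5) : ℝ × ℝ)) (s := fun _ => {p | |p.1| ≤ 1}) (K := 15)
      (fun _ => lipschitz_field)
      (fun x => ⟨(h.d1 x).prodMk (h.d2 x), h.abs_le x⟩)
      (fun x => ⟨(h'.d1 x).prodMk (h'.d2 x), h'.abs_le x⟩) (by simp [hy, hz])
  exact ⟨funext fun x => congrArg Prod.fst (congrFun key x),
    funext fun x => congrArg Prod.snd (congrFun key x)⟩

lemma Sol.neg {y z : ℝ → ℝ} (h : Sol y z) : Sol (fun x => -y x) (fun x => -z x) :=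
  ⟨fun x => (h.d1 x).neg, fun x => (h.d2 x).neg.congr_deriv (by ring),
    fun x => by simpa [(by decide : Even 6).neg_pow] using h.en x⟩

lemma Sol.shift {y z : ℝ → ℝ} (h : Sol y z) (a : ℝ) :
    Sol (fun x => y (x + a)) (fun x => z (x + a)) :=
  ⟨fun x => (h.d1 (x + a)).comp_add_const x a, fun x => (h.d2 (x + a)).comp_add_const x a,
    fun _ => h.en _⟩

lemma Sol.reflect {y z : ℝ → ℝ} (h : Sol y z) (a : ℝ) :
    Sol (fun x => y (a - x)) (fun x => -z (a - x)) :=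
  ⟨fun x => (h.d1 (a - x)).comp_const_sub a x,
    fun x => ((h.d2 (a - x)).comp_const_sub a x).neg.congr_deriv (by ring),
    fun x => by simpa using h.en (a - x)⟩

/-- The addition formula with derivatives in place of square roots, valid everywhere. -/
lemma addition_formula {s s' c c' : ℝ → ℝ} (hs : Sol s s') (hc : Sol c c')
    (s0 : s 0 = 0) (s1 : s' 0 = 1) (x y : ℝ) :
    (c (x + y)) ^ 2 =
      ((c x * s' y + s y * c' x) ^ 2 + ((c x) ^ 3 * s y - c x * (s y) ^ 3) ^ 2) /
        (1 + 4 * (s y) ^ 4 * (c x) ^ 2 + 4 * (s y) ^ 2 * (c x) ^ 4) := by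
  set L := x + y with hL
  have hq := hs.reflect L
  have hD : ∀ t, 1 + 4 * (s (L - t)) ^ 4 * (c t) ^ 2 + 4 * (s (L - t)) ^ 2 * (c t) ^ 4 ≠ 0 :=
    fun t => by positivity
  have hd : ∀ t, HasDerivAt (fun t =>
      ((c t * s' (L - t) + s (L - t) * c' t) ^ 2
        + ((c t) ^ 3 * s (L - t) - c t * (s (L - t)) ^ 3) ^ 2) /
        (1 + 4 * (s (L - t)) ^ 4 * (c t) ^ 2 + 4 * (s (L - t)) ^ 2 * (c t) ^ 4)) 0 t := by
    intro t
    have p1 := hc.d1 t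
    have u1 := hc.d2 t
    have q1 := hq.d1 t
    have v1 := (hs.d2 (L - t)).comp_const_sub L t
    have E1 := hc.en t
    have E2 := hs.en (L - t)
    have hn := (((p1.mul v1).add (q1.mul u1)).pow 2).add
      ((((p1.pow 3).mul q1).sub (p1.mul (q1.pow 3))).pow 2)
    have hden := ((((q1.pow 4).const_mul 4).mul (p1.pow 2)).const_add 1).add
      (((q1.pow 2).const_mul 4).mul (p1.pow 4))
    have hqt := hn.fun_div hden (hD t)
    refine hqt.congr_deriv ?_
    refine div_eq_zero_iff.2 (Or.inl ?_)
    simp only [Pi.add_apply, Pi.mul_apply, Pi.pow_apply, Pi.sub_apply]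
    push_cast
    generalize c t = p at *
    generalize c' t = u at *
    generalize s (L - t) = q at *
    generalize s' (L - t) = v at *
    -- Reduces the numerator of the derivative modulo `u² = 1 - p⁶` and `v² = 1 - q⁶`.
    linear_combination
      (-(q ^ 2 * ((8 * q ^ 4 * p + 16 * q ^ 2 * p ^ 3) * u
          - (16 * q ^ 3 * p ^ 2 + 8 * q * p ^ 4) * v)
        + 2 * p * q * (8 * q ^ 4 * p + 16 * q ^ 2 * p ^ 3) * v)) * E1
      - (p ^ 2 * ((8 * q ^ 4 * p + 16 * q ^ 2 * p ^ 3) * u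
          - (16 * q ^ 3 * p ^ 2 + 8 * q * p ^ 4) * v)
        - 2 * p * q * (16 * q ^ 3 * p ^ 2 + 8 * q * p ^ 4) * u) * E2
  have := is_const_of_deriv_eq_zero (fun x => (hd x).differentiableAt) (fun x => (hd x).deriv) L x
  simpa [s0, s1, hL] using this

/-- The first positive zero `T` of `s'`. -/
lemma exists_quarter {s s' : ℝ → ℝ} (hs : Sol s s') (s0 : s 0 = 0) (s1 : s' 0 = 1) :
    ∃ T, 0 < T ∧ (∀ x, 0 ≤ x → x < T → 0 < s' x) ∧ s' T = 0 := by
  have hcont : Continuous s' := continuous_iff_continuousAt.2 fun x => (hs.d2 x).continuousAt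
  have hne : ∃ x, 0 ≤ x ∧ s' x ≤ 0 := by
    by_contra! hpos
    have hmono : StrictMonoOn s (Set.Ici 0) :=
      strictMonoOn_of_deriv_pos (convex_Ici 0)
        (fun x _ => (hs.d1 x).continuousAt.continuousWithinAt)
        (fun x hx => by
          rw [interior_Ici] at hx
          rw [(hs.d1 x).deriv]
          exact hpos x (le_of_lt hx))
    have ha : 0 < s 1 := by
      have := hmono (Set.mem_Ici.2 le_rfl) (Set.mem_Ici.2 zero_le_one) zero_lt_one
      rwa [s0] at this
    have ha5 : 0 < s 1 ^ 5 := pow_pos ha 5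
    -- Past `1` one has `s'' ≤ -3 s(1)⁵ < 0`, so `s'` cannot stay positive.
    have hanti : AntitoneOn (fun x => s' x + 3 * s 1 ^ 5 * x) (Set.Ici 1) := by
      have hdd : ∀ x, HasDerivAt (fun x => s' x + 3 * s 1 ^ 5 * x)
          (-3 * s x ^ 5 + 3 * s 1 ^ 5 * 1) x :=
        fun x => (hs.d2 x).add ((hasDerivAt_id x).const_mul _)
      refine antitoneOn_of_deriv_nonpos (convex_Ici 1)
        (fun x _ => (hdd x).continuousAt.continuousWithinAt)
        (fun x _ => (hdd x).differentiableAt.differentiableWithinAt) (fun x hx => ?_)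
      rw [interior_Ici] at hx
      have hx : 1 < x := hx
      rw [(hdd x).deriv]
      have : s 1 ≤ s x := hmono.monotoneOn (Set.mem_Ici.2 zero_le_one)
        (Set.mem_Ici.2 (by linarith)) hx.le
      have := pow_le_pow_left₀ ha.le this 5
      linarith
    have hb : s' 1 ≤ 1 := by nlinarith [hs.en 1, pow_pos ha 6]
    have hX : (1 : ℝ) ≤ 1 + 1 / (3 * s 1 ^ 5) := by
      have : 0 < 1 / (3 * s 1 ^ 5) := by positivity
      linarith
    have h1 := hanti (Set.mem_Ici.2 le_rfl) (Set.mem_Ici.2 hX) hX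
    have h2 := hpos (1 + 1 / (3 * s 1 ^ 5)) (by linarith)
    have h3 : 3 * s 1 ^ 5 * (1 + 1 / (3 * s 1 ^ 5)) = 3 * s 1 ^ 5 + 1 := by field_simp
    simp only [h3] at h1
    linarith
  set S := {x | 0 ≤ x ∧ s' x ≤ 0} with hS
  have hcl : IsClosed S :=
    (isClosed_le continuous_const continuous_id).inter (isClosed_le hcont continuous_const)
  have hbb : BddBelow S := ⟨0, fun x hx => hx.1⟩
  have hT : sInf S ∈ S := hcl.csInf_mem hne hbb
  have hlt : ∀ x, 0 ≤ x → x < sInf S → 0 < s' x := fun x hx hxT => by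
    by_contra! hle
    exact absurd (csInf_le hbb ⟨hx, hle⟩) (not_le.2 hxT)
  have hT0 : 0 < sInf S := lt_of_le_of_ne hT.1 fun h => by
    have := hT.2
    rw [← h, s1] at this
    linarith
  refine ⟨sInf S, hT0, hlt, le_antisymm hT.2 ?_⟩
  by_contra! hneg
  obtain ⟨x, hx, hx0⟩ := intermediate_value_Icc' hT.1 hcont.continuousOn
    (show (0 : ℝ) ∈ Set.Icc (s' (sInf S)) (s' 0) from ⟨hneg.le, by rw [s1]; norm_num⟩)
  rcases hx.2.lt_or_eq with h | h
  · exact (hlt x hx.1 h).ne' hx0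
  · rw [h] at hx0
    linarith

/-- The substitution `t = s(x)` turns the integrand into the constant `1` on `(0, T)`. -/
lemma integral_eq_quarter {s s' : ℝ → ℝ} (hs : Sol s s') (s0 : s 0 = 0) {T : ℝ} (hT : 0 < T)
    (hpos : ∀ x, 0 ≤ x → x < T → 0 < s' x) (hz : s' T = 0) :
    s T = 1 ∧ ∫ t in (0 : ℝ)..1, 1 / Real.sqrt (1 - t ^ 6) = T := by
  have hcont : Continuous s := continuous_iff_continuousAt.2 fun x => (hs.d1 x).continuousAt
  have hmono : StrictMonoOn s (Set.Icc 0 T) :=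
    strictMonoOn_of_deriv_pos (convex_Icc 0 T) hcont.continuousOn
      (fun x hx => by
        rw [interior_Icc] at hx
        rw [(hs.d1 x).deriv]
        exact hpos x hx.1.le hx.2)
  have hsT : 0 < s T := by
    have := hmono (Set.left_mem_Icc.2 hT.le) (Set.right_mem_Icc.2 hT.le) hT
    rwa [s0] at this
  have h1 : s T = 1 := by
    have := hs.en T
    rw [hz] at this
    exact (pow_eq_one_iff_of_nonneg hsT.le (by norm_num : (6 : ℕ) ≠ 0)).1 (by linarith)
  refine ⟨h1, ?_⟩
  have himg : s '' Set.Ioo 0 T = Set.Ioo 0 1 := by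
    apply Set.Subset.antisymm
    · rintro _ ⟨x, hx, rfl⟩
      have hx' := Set.Ioo_subset_Icc_self hx
      constructor
      · have := hmono (Set.left_mem_Icc.2 hT.le) hx' hx.1
        rwa [s0] at this
      · have := hmono hx' (Set.right_mem_Icc.2 hT.le) hx.2
        rwa [h1] at this
    · have := intermediate_value_Ioo hT.le hcont.continuousOn
      rwa [s0, h1] at this
  rw [intervalIntegral.integral_of_le zero_le_one, MeasureTheory.integral_Ioc_eq_integral_Ioo,
    ← himg, MeasureTheory.integral_image_eq_integral_abs_deriv_smul measurableSet_Ioo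
      (fun x _ => (hs.d1 x).hasDerivWithinAt) (hmono.injOn.mono Set.Ioo_subset_Icc_self)]
  rw [MeasureTheory.setIntegral_congr_fun (g := fun _ => (1 : ℝ)) measurableSet_Ioo ?_]
  · simp [hT.le]
  · intro x hx
    have hp := hpos x hx.1.le hx.2
    have e : 1 - s x ^ 6 = s' x ^ 2 := by linarith [hs.en x]
    simp only [e, Real.sqrt_sq hp.le, abs_of_pos hp, smul_eq_mul]
    field_simp

/-- `s'` has antiperiod `2T` and is nonnegative on the translates of `[-T, T]` by multiples of `4T`:
`s'` is even, and reflecting `s` in `T` preserves `s`. -/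
lemma deriv_symm {s s' : ℝ → ℝ} (hs : Sol s s') (s0 : s 0 = 0) {T : ℝ}
    (hpos : ∀ x, 0 ≤ x → x < T → 0 < s' x) (hz : s' T = 0) :
    (∀ x, s' (x + 2 * T) = -s' x) ∧
    (∀ (n : ℤ) x, -T ≤ x - n * (4 * T) → x - n * (4 * T) ≤ T → 0 ≤ s' x) := by
  have hodd := (hs.unique (hs.reflect 0).neg 0 (by simp [s0]) (by simp)).2
  have heven : ∀ x, s' (-x) = s' x := fun x => by
    have := congrFun hodd x
    simp only [zero_sub, neg_neg] at this
    exact this.symm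
  have href := (hs.unique (hs.reflect (2 * T)) T (by ring_nf) (by
    have : 2 * T - T = T := by ring
    simp [this, hz])).2
  have hanti : ∀ x, s' (x + 2 * T) = -s' x := fun x => by
    have := congrFun href (x + 2 * T)
    rw [this, ← heven x]
    ring_nf
  refine ⟨hanti, fun n x h1 h2 => ?_⟩
  have hper : Function.Periodic s' (4 * T) := fun x => by
    have : x + 4 * T = x + 2 * T + 2 * T := by ring
    rw [this, hanti, hanti, neg_neg]
  rw [← hper.sub_int_mul_eq n]
  have hbase : ∀ y, 0 ≤ y → y ≤ T → 0 ≤ s' y := fun y hy hyT => by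
    rcases hyT.lt_or_eq with h | h
    · exact (hpos y hy h).le
    · rw [h, hz]
  rcases le_total 0 (x - n * (4 * T)) with h | h
  · exact hbase _ h h2
  · rw [← heven]
    exact hbase _ (by linarith) (by linarith)

end LeafAux

open LeafAux

theorem stmt_17 (s c : ℝ → ℝ)
    (hs : Differentiable ℝ s) (hs' : Differentiable ℝ (deriv s))
    (hsode : ∀ l : ℝ, deriv (deriv s) l = -3 * s l ^ 5)
    (hs0 : s 0 = 0) (hs1 : deriv s 0 = 1)
    (hc : Differentiable ℝ c) (hc' : Differentiable ℝ (deriv c))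
    (hcode : ∀ l : ℝ, deriv (deriv c) l = -3 * c l ^ 5)
    (hc0 : c 0 = 1) (hc1 : deriv c 0 = 0)
    (π₃ : ℝ) (hπ₃ : π₃ = 2 * ∫ t in (0 : ℝ)..1, 1 / Real.sqrt (1 - t ^ 6))
    (m k : ℤ) (l₁ l₂ : ℝ)
    (hdom :
      ((2 * (k : ℝ) + 1) * π₃ ≤ l₁ ∧ l₁ ≤ (2 * (k : ℝ) + 2) * π₃ ∧
        (4 * (m : ℝ) - 1) * π₃ / 2 ≤ l₂ ∧ l₂ ≤ (4 * (m : ℝ) + 1) * π₃ / 2) ∨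
      (2 * (k : ℝ) * π₃ ≤ l₁ ∧ l₁ ≤ (2 * (k : ℝ) + 1) * π₃ ∧
        (4 * (m : ℝ) + 1) * π₃ / 2 ≤ l₂ ∧ l₂ ≤ (4 * (m : ℝ) + 3) * π₃ / 2)) :
    (c (l₁ + l₂)) ^ 2 =
      ((c l₁ * Real.sqrt (1 - (s l₂) ^ 6) + s l₂ * Real.sqrt (1 - (c l₁) ^ 6)) ^ 2
          + ((c l₁) ^ 3 * s l₂ - c l₁ * (s l₂) ^ 3) ^ 2) /
        (1 + 4 * (s l₂) ^ 4 * (c l₁) ^ 2 + 4 * (s l₂) ^ 2 * (c l₁) ^ 4) := by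
  have Hs : Sol s (deriv s) := sol_of_ode hs hs' hsode (by simp [hs0, hs1])
  have Hc : Sol c (deriv c) := sol_of_ode hc hc' hcode (by simp [hc0, hc1])
  obtain ⟨T, hT, hpos, hz⟩ := exists_quarter Hs hs0 hs1
  obtain ⟨hsT, hint⟩ := integral_eq_quarter Hs hs0 hT hpos hz
  obtain ⟨hanti, hsign⟩ := deriv_symm Hs hs0 hpos hz
  have hcs : ∀ x, deriv c x = deriv s (x + T) :=
    congrFun (Hc.unique (Hs.shift T) 0 (by simp [hc0, hsT]) (by simp [hc1, hz])).2
  rw [hint] at hπ₃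
  subst hπ₃
  have huv : 0 ≤ deriv s l₂ * deriv c l₁ := by
    rw [hcs]
    rcases hdom with ⟨h1, h2, h3, h4⟩ | ⟨h1, h2, h3, h4⟩
    · exact mul_nonneg (hsign m _ (by linarith) (by linarith))
        (hsign (k + 1) _ (by push_cast; linarith) (by push_cast; linarith))
    · have e1 := hanti (l₂ - 2 * T)
      have e2 := hanti (l₁ - T)
      rw [show l₂ - 2 * T + 2 * T = l₂ by ring] at e1
      rw [show l₁ - T + 2 * T = l₁ + T by ring] at e2
      rw [e1, e2, neg_mul_neg]
      exact mul_nonneg (hsign m _ (by linarith) (by linarith))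
        (hsign k _ (by linarith) (by linarith))
  have a1 : Real.sqrt (1 - s l₂ ^ 6) = |deriv s l₂| := by
    rw [← Real.sqrt_sq_eq_abs]
    congr 1
    linarith [Hs.en l₂]
  have a2 : Real.sqrt (1 - c l₁ ^ 6) = |deriv c l₁| := by
    rw [← Real.sqrt_sq_eq_abs]
    congr 1
    linarith [Hc.en l₁]
  have a3 : |deriv s l₂| * |deriv c l₁| = deriv s l₂ * deriv c l₁ := by
    rw [← abs_mul, abs_of_nonneg huv]
  have a4 := sq_abs (deriv s l₂)
  have a5 := sq_abs (deriv c l₁)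
  rw [addition_formula Hs Hc hs0 hs1, a1, a2]
  congr 2
  linear_combination (-2 * c l₁ * s l₂) * a3 - (c l₁) ^ 2 * a4 - (s l₂) ^ 2 * a5
end

section
/- For all real a, b, da, db satisfying da² = 1 − a⁶ and db² = 1 − b⁶, one has [ 2·(a·db + b·da)·(da·db − 3·a⁵·b) + 2·(a³·b − a·b³)·(3·a²·b − b³)·da ]·(1 + 4·a⁴·b² + 4·a²·b⁴) − [ (a·db + b·da)² + (a³·b − a·b³)² ]·8·a·b²·(2·a² + b²)·da = (2·a − 8·a⁵·b² − 24·a³·b⁴ − 8·a·b⁶ − 16·a⁵·b⁸)·da + (2·b − 8·a²·b⁵ − 24·a⁴·b³ − 8·a⁶·b − 16·a⁸·b⁵)·db. -/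
theorem stmt_19 (a b da db : ℝ) (ha : da ^ 2 = 1 - a ^ 6) (hb : db ^ 2 = 1 - b ^ 6) :
    (2 * (a * db + b * da) * (da * db - 3 * a ^ 5 * b)
          + 2 * (a ^ 3 * b - a * b ^ 3) * (3 * a ^ 2 * b - b ^ 3) * da)
        * (1 + 4 * a ^ 4 * b ^ 2 + 4 * a ^ 2 * b ^ 4)
      - ((a * db + b * da) ^ 2 + (a ^ 3 * b - a * b ^ 3) ^ 2)
        * (8 * a * b ^ 2 * (2 * a ^ 2 + b ^ 2) * da)
      = (2 * a - 8 * a ^ 5 * b ^ 2 - 24 * a ^ 3 * b ^ 4 - 8 * a * b ^ 6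
            - 16 * a ^ 5 * b ^ 8) * da
        + (2 * b - 8 * a ^ 2 * b ^ 5 - 24 * a ^ 4 * b ^ 3 - 8 * a ^ 6 * b
            - 16 * a ^ 8 * b ^ 5) * db := by
  -- The coefficients are the quotients obtained by reducing modulo the two energy relations.
  linear_combination
    (2 * b * (1 + 4 * a ^ 4 * b ^ 2 + 4 * a ^ 2 * b ^ 4) * db
      - (8 * a * b ^ 2 * (2 * a ^ 2 + b ^ 2)) * (2 * a * b * db + b ^ 2 * da)) * ha
    + (2 * a * (1 + 4 * a ^ 4 * b ^ 2 + 4 * a ^ 2 * b ^ 4)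
      - (8 * a * b ^ 2 * (2 * a ^ 2 + b ^ 2)) * a ^ 2) * da * hb
end
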